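/- Let m ≥ 3 and G = DA(m). There exists a polynomial P with nonnegative coefficients such that for every g ∈ G and every k ∈ ℕ, the number of elements g_1 ∈ G with ℓ(g_1) = k and (g_1, g_1^{-1}g) ∈ 𝒫(g) is at most P(k). -/

import Mathlib

namespace ArtinRD

/-- The alternating product `xyxy...` with `m` factors, starting with `x`. -/
def altProd {G : Type*} [Monoid G] : ℕ → G → G → G
  | 0, _, _ => 1
  | n + 1, x, y => x * altProd n y x

/-- The Artin relators determined by a Coxeter-type matrix `M` (`⊤` meaning `∞`). -/
def artinRels (n : ℕ) (M : Fin n → Fin n → ℕ∞) : Set (FreeGroup (Fin n)) :=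
  {r | ∃ i j : Fin n, i ≠ j ∧ ∃ m : ℕ, M i j = (m : ℕ∞) ∧
    r = altProd m (FreeGroup.of i) (FreeGroup.of j) *
        (altProd m (FreeGroup.of j) (FreeGroup.of i))⁻¹}

/-- The Artin group associated to the matrix `M`. -/
abbrev ArtinGroup (n : ℕ) (M : Fin n → Fin n → ℕ∞) : Type := PresentedGroup (artinRels n M)

/-- The standard generator `x_i` of the Artin group. -/
def gen (n : ℕ) (M : Fin n → Fin n → ℕ∞) (i : Fin n) : ArtinGroup n M := PresentedGroup.of i

/-- The set `A = {x_1^{±1}, ..., x_n^{±1}}` of standard letters. -/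
def genSet (n : ℕ) (M : Fin n → Fin n → ℕ∞) : Set (ArtinGroup n M) :=
  {g | ∃ i : Fin n, g = gen n M i ∨ g = (gen n M i)⁻¹}

/-- Word length of `g` with respect to a set `S`: the least `N` such that `g` is a
product of `N` elements of `S`. -/
noncomputable def wordLength {G : Type*} [Group G] (S : Set G) (g : G) : ℕ :=
  sInf {N : ℕ | ∃ w : List G, (∀ a ∈ w, a ∈ S) ∧ w.length = N ∧ w.prod = g}

/-- The word length on an Artin group with respect to the standard letters. -/
noncomputable def ℓA (n : ℕ) (M : Fin n → Fin n → ℕ∞) : ArtinGroup n M → ℕ :=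
  wordLength (genSet n M)

/-- A letter: a generator index together with a sign (`true` = positive). -/
abbrev Letter (n : ℕ) := Fin n × Bool

/-- The group element corresponding to a letter. -/
def toGen (n : ℕ) (M : Fin n → Fin n → ℕ∞) (l : Letter n) : ArtinGroup n M :=
  if l.2 then gen n M l.1 else (gen n M l.1)⁻¹

/-- The group element represented by a word over the letters. -/
def wordElt (n : ℕ) (M : Fin n → Fin n → ℕ∞) (w : List (Letter n)) : ArtinGroup n M :=
  (w.map (toGen n M)).prod

/-- A word is geodesic if its length equals the word length of the element it represents. -/
def IsGeodesic (n : ℕ) (M : Fin n → Fin n → ℕ∞) (w : List (Letter n)) : Prop :=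
  wordLength (genSet n M) (wordElt n M w) = w.length

/-- `h` is a left divisor of `g`: the factorisation `g = h ⬝ (h⁻¹ g)` is geodesic. -/
def IsLeftDiv {G : Type*} [Group G] (ℓ : G → ℕ) (h g : G) : Prop :=
  ℓ h + ℓ (h⁻¹ * g) = ℓ g

/-- `h` is a right divisor of `g`: the factorisation `g = (g h⁻¹) ⬝ h` is geodesic. -/
def IsRightDiv {G : Type*} [Group G] (ℓ : G → ℕ) (h g : G) : Prop :=
  ℓ (g * h⁻¹) + ℓ h = ℓ g

/-- The two-generator ("dihedral") subgroup `G(i,j)`. -/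
def Gij (n : ℕ) (M : Fin n → Fin n → ℕ∞) (i j : Fin n) : Subgroup (ArtinGroup n M) :=
  Subgroup.closure {gen n M i, gen n M j}

/-- The letters `x_i^{±1}, x_j^{±1}` as group elements. -/
def lettersIJ (n : ℕ) (M : Fin n → Fin n → ℕ∞) (i j : Fin n) : Set (ArtinGroup n M) :=
  {gen n M i, (gen n M i)⁻¹, gen n M j, (gen n M j)⁻¹}

/-- The maximal `{x_i,x_j}`-prefix of a word. -/
def ijPrefix (n : ℕ) (i j : Fin n) (w : List (Letter n)) : List (Letter n) :=
  w.takeWhile (fun l => l.1 == i || l.1 == j)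

/-- `h` is a left divisor of `g` lying in `G(i,j)` of maximal word length. -/
def IsMaxLD (n : ℕ) (M : Fin n → Fin n → ℕ∞) (i j : Fin n) (g h : ArtinGroup n M) : Prop :=
  h ∈ Gij n M i j ∧ IsLeftDiv (ℓA n M) h g ∧
    ∀ h' ∈ Gij n M i j, IsLeftDiv (ℓA n M) h' g → ℓA n M h' ≤ ℓA n M h

/-- `h` is a right divisor of `g` lying in `G(i,j)` of maximal word length. -/
def IsMaxRD (n : ℕ) (M : Fin n → Fin n → ℕ∞) (i j : Fin n) (g h : ArtinGroup n M) : Prop :=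
  h ∈ Gij n M i j ∧ IsRightDiv (ℓA n M) h g ∧
    ∀ h' ∈ Gij n M i j, IsRightDiv (ℓA n M) h' g → ℓA n M h' ≤ ℓA n M h

/-- The Coxeter matrix of the dihedral Artin group `DA(m)`. -/
def DMat (m : ℕ) : Fin 2 → Fin 2 → ℕ∞ := fun i j => if i = j then 1 else (m : ℕ∞)

/-- The dihedral Artin group `DA(m) = ⟨x₁, x₂ ∣ ₘ(x₁,x₂) = ₘ(x₂,x₁)⟩`. -/
abbrev DA (m : ℕ) : Type := ArtinGroup 2 (DMat m)

/-- The word length on `DA(m)` with respect to `{x₁^{±1}, x₂^{±1}}`. -/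
noncomputable def ℓD (m : ℕ) : DA m → ℕ := ℓA 2 (DMat m)

/-- The Garside element `Δ = ₘ(x₁,x₂)` of `DA(m)`. -/
def Delta (m : ℕ) : DA m := altProd m (gen 2 (DMat m) 0) (gen 2 (DMat m) 1)

/-- A positive element of `DA(m)`: a product of the generators. -/
def posElt (m : ℕ) (g : DA m) : Prop :=
  g ∈ Submonoid.closure ({gen 2 (DMat m) 0, gen 2 (DMat m) 1} : Set (DA m))

/-- A negative element of `DA(m)`: a product of the inverses of the generators. -/
def negElt (m : ℕ) (g : DA m) : Prop :=
  g ∈ Submonoid.closure ({(gen 2 (DMat m) 0)⁻¹, (gen 2 (DMat m) 1)⁻¹} : Set (DA m))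

/-- `k` is the largest exponent such that `Δ^k` is a left divisor of `g`
(i.e. `d(g) = k` for a positive element `g`). -/
def IsMaxDeltaPow (m : ℕ) (k : ℕ) (g : DA m) : Prop :=
  IsLeftDiv (ℓD m) (Delta m ^ k) g ∧ ∀ k' : ℕ, IsLeftDiv (ℓD m) (Delta m ^ k') g → k' ≤ k

/-- `k` is the largest exponent such that `Δ^{-k}` is a left divisor of `g`
(i.e. `d(g) = k` for a negative element `g`). -/
def IsMaxNegDeltaPow (m : ℕ) (k : ℕ) (g : DA m) : Prop :=
  IsLeftDiv (ℓD m) ((Delta m)⁻¹ ^ k) g ∧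
    ∀ k' : ℕ, IsLeftDiv (ℓD m) ((Delta m)⁻¹ ^ k') g → k' ≤ k

/-- The set of letters `{x₁^{±1}, x₂^{±1}}` of `DA(m)`. -/
def lettersDA (m : ℕ) : Set (DA m) :=
  {gen 2 (DMat m) 0, (gen 2 (DMat m) 0)⁻¹, gen 2 (DMat m) 1, (gen 2 (DMat m) 1)⁻¹}

/-- `h` has a representative of the form `a^s b^t` (at most two syllables). -/
def TwoSyllable (m : ℕ) (h : DA m) : Prop :=
  ∃ a ∈ lettersDA m, ∃ b ∈ lettersDA m, ∃ s t : ℕ, h = a ^ s * b ^ t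

/-- The permissible factorisations `𝒫(g)` of an element `g` of `DA(m)`:
all geodesic factorisations if `g` is unsigned; for signed `g`, those geodesic
factorisations lying in `𝒫¹(g) ∪ 𝒫²(g)`. -/
def PermDA (m : ℕ) (g : DA m) (q : DA m × DA m) : Prop :=
  q.1 * q.2 = g ∧ ℓD m q.1 + ℓD m q.2 = ℓD m g ∧
  ((posElt m g ∨ negElt m g) →
    (TwoSyllable m q.1 ∨ TwoSyllable m q.2 ∨
     (posElt m g ∧ posElt m q.1 ∧ posElt m q.2 ∧
       ∃ k₁ k₂ : ℕ, IsMaxDeltaPow m k₁ q.1 ∧ IsMaxDeltaPow m k₂ q.2 ∧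
         IsMaxDeltaPow m (k₁ + k₂) g) ∨
     (negElt m g ∧ negElt m q.1 ∧ negElt m q.2 ∧
       ∃ k₁ k₂ : ℕ, IsMaxNegDeltaPow m k₁ q.1 ∧ IsMaxNegDeltaPow m k₂ q.2 ∧
         IsMaxNegDeltaPow m (k₁ + k₂) g)))

/-! ### Word length basics -/
section WL
variable {G : Type*} [Group G] {S : Set G}

lemma wl_le (w : List G) (hw : ∀ a ∈ w, a ∈ S) : wordLength S w.prod ≤ w.length :=
  Nat.sInf_le ⟨w, hw, rfl, rfl⟩

lemma wl_exists (hS : ∀ g : G, ∃ w : List G, (∀ a ∈ w, a ∈ S) ∧ w.prod = g) (g : G) :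
    ∃ w : List G, (∀ a ∈ w, a ∈ S) ∧ w.length = wordLength S g ∧ w.prod = g := by
  obtain ⟨w, hw, h⟩ := hS g
  exact Nat.sInf_mem (s := {N : ℕ | ∃ w : List G, (∀ a ∈ w, a ∈ S) ∧ w.length = N ∧ w.prod = g})
    ⟨w.length, w, hw, rfl, h⟩
end WL

lemma map_altProd {G H : Type*} [Monoid G] [Monoid H] (f : G →* H) (n : ℕ) (x y : G) :
    f (altProd n x y) = altProd n (f x) (f y) := by
  induction n generalizing x y with
  | zero => simp [altProd]
  | succ n ih => simp [altProd, ih]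

/-- Generators indexed by `ZMod 2`. -/
def gz (m : ℕ) (x : ZMod 2) : DA m := gen 2 (DMat m) x

lemma fin2_ne {i j : ZMod 2} (h : i ≠ j) : j = i + 1 := by
  revert i j; decide

lemma z2_dbl (x : ZMod 2) : x + x = 0 := by revert x; decide

lemma z2_cases (x : ZMod 2) : x = 0 ∨ x = 1 := by revert x; decide

lemma f2_cases (x : Fin 2) : x = 0 ∨ x = 1 := by revert x; decide

lemma rel_lift {m : ℕ} {H : Type*} [Group H] (f : Fin 2 → H)
    (h : altProd m (f 0) (f 1) = altProd m (f 1) (f 0)) :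
    ∀ r ∈ artinRels 2 (DMat m), FreeGroup.lift f r = 1 := by
  rintro r ⟨i, j, hij, m', hm', rfl⟩
  have : m = m' := by
    simp only [DMat, hij, if_false] at hm'
    exact_mod_cast hm'
  subst this
  rw [map_mul, map_inv, map_altProd, map_altProd, FreeGroup.lift_apply_of, FreeGroup.lift_apply_of,
    mul_inv_eq_one]
  rcases f2_cases i with rfl | rfl <;> rcases f2_cases j with rfl | rfl
  · exact absurd rfl hij
  · exact h
  · exact h.symm
  · exact absurd rfl hij

/-- Universal property of `DA m`. -/
def DAlift {m : ℕ} {H : Type*} [Group H] (f : ZMod 2 → H)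
    (h : altProd m (f 0) (f 1) = altProd m (f 1) (f 0)) : DA m →* H :=
  PresentedGroup.toGroup (rel_lift f h)

lemma DAlift_gz {m : ℕ} {H : Type*} [Group H] (f : ZMod 2 → H)
    (h : altProd m (f 0) (f 1) = altProd m (f 1) (f 0)) (x : ZMod 2) :
    DAlift f h (gz m x) = f x :=
  PresentedGroup.toGroup.of (rel_lift f h)

lemma gz_rel (m : ℕ) : altProd m (gz m 0) (gz m 1) = altProd m (gz m 1) (gz m 0) := by
  have := PresentedGroup.mk_eq_mk_of_mul_inv_mem (rels := artinRels 2 (DMat m))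
    (x := altProd m (FreeGroup.of 0) (FreeGroup.of 1))
    (y := altProd m (FreeGroup.of 1) (FreeGroup.of 0))
    ⟨0, 1, by decide, m, by simp [DMat], rfl⟩
  rw [map_altProd, map_altProd] at this
  exact this

lemma Delta_eq (m : ℕ) (x : ZMod 2) : altProd m (gz m x) (gz m (x + 1)) = Delta m := by
  rcases z2_cases x with rfl | rfl
  · rfl
  · exact (gz_rel m).symm

lemma mem_genSet {m : ℕ} {g : DA m} :
    g ∈ genSet 2 (DMat m) ↔ ∃ x : ZMod 2, g = gz m x ∨ g = (gz m x)⁻¹ := Iff.rfl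

lemma DA_induction {m : ℕ} {C : DA m → Prop} (one : C 1) (mul : ∀ g h, C g → C h → C (g * h))
    (inv : ∀ g, C g → C g⁻¹) (gn : ∀ x, C (gz m x)) (g : DA m) : C g := by
  let H : Subgroup (DA m) :=
    { carrier := {g | C g}
      one_mem' := one
      mul_mem' := fun {a b} ha hb => mul a b ha hb
      inv_mem' := fun {a} ha => inv a ha }
  exact PresentedGroup.generated_by _ H gn g

lemma DA_words {m : ℕ} (g : DA m) :
    ∃ w : List (DA m), (∀ a ∈ w, a ∈ genSet 2 (DMat m)) ∧ w.prod = g := by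
  induction g using DA_induction with
  | one => exact ⟨[], by simp, rfl⟩
  | mul g h ihg ihh =>
    obtain ⟨w, hw, rfl⟩ := ihg
    obtain ⟨w', hw', rfl⟩ := ihh
    refine ⟨w ++ w', ?_, by simp⟩
    intro a ha
    rcases List.mem_append.1 ha with h | h
    · exact hw a h
    · exact hw' a h
  | inv g ih =>
    obtain ⟨w, hw, rfl⟩ := ih
    refine ⟨(w.map (·⁻¹)).reverse, ?_, by rw [List.prod_inv_reverse]⟩
    intro a ha
    simp only [List.mem_reverse, List.mem_map] at ha
    obtain ⟨b, hb, rfl⟩ := ha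
    obtain ⟨x, h | h⟩ := mem_genSet.1 (hw b hb)
    · exact mem_genSet.2 ⟨x, Or.inr (by rw [h])⟩
    · exact mem_genSet.2 ⟨x, Or.inl (by rw [h, inv_inv])⟩
  | gn x => exact ⟨[gz m x], by simpa using mem_genSet.2 ⟨x, Or.inl rfl⟩, by simp⟩

section len
variable {m : ℕ}

lemma len_geo (g : DA m) : ∃ w : List (DA m), (∀ a ∈ w, a ∈ genSet 2 (DMat m)) ∧
    w.length = ℓD m g ∧ w.prod = g := wl_exists DA_words g

lemma len_prod_le (w : List (DA m)) (hw : ∀ a ∈ w, a ∈ genSet 2 (DMat m)) :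
    ℓD m w.prod ≤ w.length := wl_le w hw

lemma len_mul (g h : DA m) : ℓD m (g * h) ≤ ℓD m g + ℓD m h := by
  obtain ⟨w, hw, h1, h2⟩ := len_geo g
  obtain ⟨w', hw', h1', h2'⟩ := len_geo h
  rw [← h1, ← h1', ← List.length_append, ← h2, ← h2', ← List.prod_append]
  apply len_prod_le
  intro a ha
  rcases List.mem_append.1 ha with h | h
  · exact hw a h
  · exact hw' a h

lemma len_one : ℓD m 1 = 0 := by
  have := len_prod_le (m := m) [] (by simp)
  simpa using this

lemma len_eq_zero {g : DA m} (h : ℓD m g = 0) : g = 1 := by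
  obtain ⟨w, hw, h1, h2⟩ := len_geo g
  rw [h, List.length_eq_zero_iff] at h1
  rw [← h2, h1]; rfl

lemma inv_mem_genSet {a : DA m} (h : a ∈ genSet 2 (DMat m)) : a⁻¹ ∈ genSet 2 (DMat m) := by
  obtain ⟨x, h | h⟩ := mem_genSet.1 h
  · exact mem_genSet.2 ⟨x, Or.inr (by rw [h])⟩
  · exact mem_genSet.2 ⟨x, Or.inl (by rw [h, inv_inv])⟩

lemma len_inv_le (g : DA m) : ℓD m g⁻¹ ≤ ℓD m g := by
  obtain ⟨w, hw, h1, h2⟩ := len_geo g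
  rw [← h1, ← h2, List.prod_inv_reverse]
  refine (len_prod_le _ ?_).trans (by simp)
  intro a ha
  simp only [List.mem_reverse, List.mem_map] at ha
  obtain ⟨b, hb, rfl⟩ := ha
  exact inv_mem_genSet (hw b hb)

lemma len_inv (g : DA m) : ℓD m g⁻¹ = ℓD m g :=
  le_antisymm (len_inv_le g) (by simpa using len_inv_le g⁻¹)

lemma len_map_le (f : DA m →* DA m) (hf : ∀ x, f (gz m x) ∈ genSet 2 (DMat m)) (g : DA m) :
    ℓD m (f g) ≤ ℓD m g := by
  obtain ⟨w, hw, h1, h2⟩ := len_geo g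
  rw [← h1, ← h2, map_list_prod]
  refine (len_prod_le _ ?_).trans (by simp)
  intro a ha
  simp only [List.mem_map] at ha
  obtain ⟨b, hb, rfl⟩ := ha
  obtain ⟨x, h | h⟩ := mem_genSet.1 (hw b hb)
  · rw [h]; exact hf x
  · rw [h, map_inv]; exact inv_mem_genSet (hf x)

/-- Letters have a function `D` changing by at most one. -/
lemma len_gz (x : ZMod 2) : ℓD m (gz m x) ≤ 1 := by
  simpa using len_prod_le [gz m x] (by simpa using mem_genSet.2 ⟨x, Or.inl rfl⟩)

lemma len_pow (g : DA m) (n : ℕ) : ℓD m (g ^ n) ≤ n * ℓD m g := by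
  induction n with
  | zero => simp [len_one]
  | succ n ih =>
    rw [pow_succ]
    refine (len_mul _ _).trans ?_
    rw [Nat.succ_mul]; omega

/-- the exponent-sum homomorphism -/
def lamHom (m : ℕ) : DA m →* Multiplicative ℤ := DAlift (fun _ => Multiplicative.ofAdd 1) rfl

def lam (g : DA m) : ℤ := Multiplicative.toAdd (lamHom m g)

lemma lam_mul (g h : DA m) : lam (g * h) = lam g + lam h := by simp [lam]
lemma lam_inv (g : DA m) : lam g⁻¹ = - lam g := by simp [lam]
lemma lam_one : lam (1 : DA m) = 0 := by simp [lam]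
lemma lam_gz (x : ZMod 2) : lam (gz m x) = 1 := by simp [lam, lamHom, DAlift_gz]
lemma lam_pow (g : DA m) (n : ℕ) : lam (g ^ n) = n * lam g := by simp [lam]
lemma lam_zpow (g : DA m) (n : ℤ) : lam (g ^ n) = n * lam g := by simp [lam]

lemma lam_alt (n : ℕ) (x y : ZMod 2) : lam (altProd n (gz m x) (gz m y)) = n := by
  induction n generalizing x y with
  | zero => simp [altProd, lam_one]
  | succ n ih => rw [altProd, lam_mul, ih, lam_gz]; push_cast; ring

lemma lam_Delta : lam (Delta m) = m := lam_alt m 0 1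

lemma len_alt (n : ℕ) (x y : ZMod 2) : ℓD m (altProd n (gz m x) (gz m y)) ≤ n := by
  induction n generalizing x y with
  | zero => simp [altProd, len_one]
  | succ n ih =>
    rw [altProd]
    have := len_mul (gz m x) (altProd n (gz m y) (gz m x))
    have := ih y x
    have := len_gz (m := m) x
    omega

lemma len_Delta_le : ℓD m (Delta m) ≤ m := len_alt m 0 1

lemma abs_lam_prod_le (w : List (DA m)) (hw : ∀ a ∈ w, a ∈ genSet 2 (DMat m)) :
    |lam w.prod| ≤ w.length := by
  induction w with
  | nil => simp [lam_one]
  | cons a w ih =>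
    rw [List.prod_cons, lam_mul, List.length_cons]
    have h1 := ih (fun b hb => hw b (List.mem_cons_of_mem _ hb))
    have h2 : |lam a| ≤ 1 := by
      obtain ⟨x, h | h⟩ := mem_genSet.1 (hw a List.mem_cons_self) <;> simp [h, lam_gz, lam_inv]
    have := abs_add_le (lam a) (lam w.prod)
    push_cast; linarith

lemma abs_lam_le (g : DA m) : |lam g| ≤ ℓD m g := by
  obtain ⟨w, hw, h1, h2⟩ := len_geo g
  have := abs_lam_prod_le w hw
  rwa [h1, h2] at this

lemma lam_le (g : DA m) : lam g ≤ ℓD m g := (le_abs_self _).trans (abs_lam_le g)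

lemma posElt_gz (x : ZMod 2) : posElt m (gz m x) := by
  apply Submonoid.subset_closure
  rcases z2_cases x with rfl | rfl
  · exact Or.inl rfl
  · exact Or.inr rfl

lemma posElt_mul {g h : DA m} (hg : posElt m g) (hh : posElt m h) : posElt m (g * h) :=
  Submonoid.mul_mem _ hg hh

lemma posElt_one : posElt m 1 := Submonoid.one_mem _

lemma posElt_alt (n : ℕ) (x y : ZMod 2) : posElt m (altProd n (gz m x) (gz m y)) := by
  induction n generalizing x y with
  | zero => exact posElt_one
  | succ n ih => exact posElt_mul (posElt_gz x) (ih y x)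

lemma posElt_Delta_pow (n : ℕ) : posElt m (Delta m ^ n) :=
  Submonoid.pow_mem _ (posElt_alt m 0 1) n

lemma len_of_pos {g : DA m} (hg : posElt m g) : (ℓD m g : ℤ) = lam g := by
  refine le_antisymm ?_ (lam_le g)
  induction hg using Submonoid.closure_induction with
  | mem x hx =>
    have : ∃ y, x = gz m y := by
      rcases hx with h | h
      · exact ⟨0, h⟩
      · exact ⟨1, h⟩
    obtain ⟨y, rfl⟩ := this
    rw [lam_gz]; exact_mod_cast len_gz y
  | one => simp [len_one, lam_one]
  | mul x y _ _ hx hy =>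
    rw [lam_mul]
    have := len_mul x y
    omega

/-- a nonpositive element has a geodesic word with a negative letter -/
lemma not_pos_split {g : DA m} (hg : ¬ posElt m g) :
    ∃ (p q : DA m) (x : ZMod 2), g = p * (gz m x)⁻¹ * q ∧ ℓD m p + 1 + ℓD m q ≤ ℓD m g := by
  obtain ⟨w, hw, h1, h2⟩ := len_geo g
  by_cases h : ∃ x : ZMod 2, (gz m x)⁻¹ ∈ w
  · obtain ⟨x, hx⟩ := h
    obtain ⟨s, t, rfl⟩ := List.append_of_mem hx
    refine ⟨s.prod, t.prod, x, by rw [← h2]; simp [mul_assoc], ?_⟩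
    have hs := len_prod_le s (fun a ha => hw a (by simp [ha]))
    have ht := len_prod_le t (fun a ha => hw a (by simp [ha]))
    simp at h1; omega
  · exfalso; apply hg
    rw [← h2]
    apply Submonoid.list_prod_mem
    intro a ha
    obtain ⟨x, h' | h'⟩ := mem_genSet.1 (hw a ha)
    · rw [h']; exact posElt_gz x
    · exact absurd ⟨x, h' ▸ ha⟩ h

lemma pos_of_lam {g : DA m} (h : lam g = ℓD m g) : posElt m g := by
  by_contra hg
  obtain ⟨p, q, x, h1, h2⟩ := not_pos_split hg
  have h3 : lam g = lam p - 1 + lam q := by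
    rw [h1, lam_mul, lam_mul, lam_inv, lam_gz]; ring
  have := lam_le p
  have := lam_le q
  omega

/-- geodesic factors of positive elements are positive -/
lemma pos_factors {g h : DA m} (hp : posElt m (g * h)) (hl : ℓD m g + ℓD m h = ℓD m (g * h)) :
    posElt m g ∧ posElt m h := by
  have h1 := len_of_pos hp
  rw [lam_mul] at h1
  have := lam_le g
  have := lam_le h
  exact ⟨pos_of_lam (by omega), pos_of_lam (by omega)⟩

end len
section alg
variable {m : ℕ}

/-- alternating positive word of length `n` starting with `s` -/
def alt (m n : ℕ) (s : ZMod 2) : DA m := altProd n (gz m s) (gz m (s + 1))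

lemma z2_add_one_one (s : ZMod 2) : s + 1 + 1 = s := by revert s; decide

lemma alt_zero (s : ZMod 2) : alt m 0 s = 1 := rfl

lemma alt_succ (n : ℕ) (s : ZMod 2) : alt m (n + 1) s = gz m s * alt m n (s + 1) := by
  rw [alt, altProd, alt, z2_add_one_one]

lemma alt_succ' (n : ℕ) (s : ZMod 2) : alt m (n + 1) s = alt m n s * gz m (s + n) := by
  induction n generalizing s with
  | zero => simp [alt_succ, alt_zero]
  | succ n ih =>
    rw [alt_succ, ih, ← mul_assoc, ← alt_succ]
    congr 2; push_cast; ring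

lemma alt_m (s : ZMod 2) : alt m m s = Delta m := Delta_eq m s

lemma Delta_gz (x : ZMod 2) : Delta m * gz m x = gz m (x + m) * Delta m := by
  have h1 := alt_succ (m := m) m (x + m)
  rw [alt_succ', alt_m, alt_m] at h1
  rw [← h1, add_assoc, z2_dbl, add_zero]

lemma Delta_inv_gz (x : ZMod 2) : (Delta m)⁻¹ * gz m x = gz m (x + m) * (Delta m)⁻¹ := by
  have := Delta_gz (m := m) (x + m)
  rw [add_assoc, z2_dbl, add_zero] at this
  rw [inv_mul_eq_iff_eq_mul, ← mul_assoc, this]; simp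

lemma Delta_zpow_gz (c : ℤ) : ∀ x : ZMod 2,
    Delta m ^ c * gz m x = gz m (x + (m : ZMod 2) * (c : ZMod 2)) * Delta m ^ c := by
  induction c using Int.induction_on with
  | zero => simp
  | succ n ih =>
    intro x
    rw [zpow_add_one, mul_assoc, Delta_gz, ← mul_assoc, ih, mul_assoc]
    congr 2; push_cast; ring
  | pred n ih =>
    intro x
    rw [zpow_sub_one, mul_assoc, Delta_inv_gz, ← mul_assoc, ih, mul_assoc]
    congr 2; push_cast
    have := z2_dbl (m : ZMod 2)
    linear_combination this

/-- conjugation by a power of `Δ` preserves the length -/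
lemma len_conj_le (c : ℤ) (g : DA m) : ℓD m (Delta m ^ c * g * (Delta m ^ c)⁻¹) ≤ ℓD m g := by
  have := len_map_le (MulAut.conj (Delta m ^ c)).toMonoidHom (fun x => ?_) g
  · exact this
  · rw [mem_genSet]
    refine ⟨x + (m : ZMod 2) * (c : ZMod 2), Or.inl ?_⟩
    · change Delta m ^ c * gz m x * (Delta m ^ c)⁻¹ = _
      rw [Delta_zpow_gz, mul_inv_cancel_right]

lemma len_conj (c : ℤ) (g : DA m) : ℓD m (Delta m ^ c * g * (Delta m ^ c)⁻¹) = ℓD m g := by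
  refine le_antisymm (len_conj_le c g) ?_
  have := len_conj_le (-c) (Delta m ^ c * g * (Delta m ^ c)⁻¹)
  simpa [mul_assoc] using this

lemma len_Delta_pow (n : ℕ) : ℓD m (Delta m ^ n) = n * m := by
  have := len_of_pos (posElt_Delta_pow (m := m) n)
  rw [lam_pow, lam_Delta] at this
  exact_mod_cast this

/-- inverse of alternating products of inverses -/
lemma alt_inv_inv (n : ℕ) (s : ZMod 2) :
    altProd n (gz m s)⁻¹ (gz m (s + 1))⁻¹ = (alt m n (s + n + 1))⁻¹ := by
  induction n generalizing s with
  | zero => simp [altProd, alt_zero]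
  | succ n ih =>
    have := ih (s + 1)
    rw [z2_add_one_one] at this
    rw [altProd, this, alt_succ', mul_inv_rev]
    have e1 : s + 1 + (n : ZMod 2) + 1 = s + ((n + 1 : ℕ) : ZMod 2) + 1 := by push_cast; ring
    have e2 : s + ((n + 1 : ℕ) : ZMod 2) + 1 + n = s := by
      push_cast
      have h1 := z2_dbl (n : ZMod 2)
      have h2 := z2_dbl (1 : ZMod 2)
      linear_combination h1 + h2
    rw [e1, e2]

lemma altm_inv (s : ZMod 2) : altProd m (gz m s)⁻¹ (gz m (s + 1))⁻¹ = (Delta m)⁻¹ := by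
  rw [alt_inv_inv, alt_m]

/-- the automorphism inverting the generators -/
def iota (m : ℕ) : DA m →* DA m := DAlift (fun x => (gz m x)⁻¹) (by
  have h0 := altm_inv (m := m) 0
  have h1 := altm_inv (m := m) 1
  rw [zero_add] at h0
  rw [show (1 : ZMod 2) + 1 = 0 from rfl] at h1
  rw [h0, h1])

lemma iota_gz (x : ZMod 2) : iota m (gz m x) = (gz m x)⁻¹ := DAlift_gz _ _ x

lemma iota_iota (g : DA m) : iota m (iota m g) = g := by
  induction g using DA_induction with
  | one => simp
  | mul g h ihg ihh => simp [ihg, ihh]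
  | inv g ih => simp [ih]
  | gn x => simp [iota_gz]

lemma iota_Delta : iota m (Delta m) = (Delta m)⁻¹ := by
  rw [← alt_m 0, alt, map_altProd, iota_gz, iota_gz, altm_inv, Delta_eq]

lemma len_iota_le (g : DA m) : ℓD m (iota m g) ≤ ℓD m g :=
  len_map_le _ (fun x => by rw [iota_gz]; exact mem_genSet.2 ⟨x, Or.inr rfl⟩) g

lemma len_iota (g : DA m) : ℓD m (iota m g) = ℓD m g :=
  le_antisymm (len_iota_le g) (by simpa [iota_iota] using len_iota_le (iota m g))

lemma pos_iota {g : DA m} (h : negElt m g) : posElt m (iota m g) := by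
  induction h using Submonoid.closure_induction with
  | mem x hx =>
    rcases hx with h | h
    · rw [h, map_inv]
      change posElt m (iota m (gz m 0))⁻¹
      rw [iota_gz, inv_inv]; exact posElt_gz 0
    · rw [h, map_inv]
      change posElt m (iota m (gz m 1))⁻¹
      rw [iota_gz, inv_inv]; exact posElt_gz 1
  | one => rw [map_one]; exact posElt_one
  | mul x y _ _ hx hy => rw [map_mul]; exact posElt_mul hx hy

lemma neg_iota {g : DA m} (h : posElt m g) : negElt m (iota m g) := by
  induction h using Submonoid.closure_induction with
  | mem x hx =>
    apply Submonoid.subset_closure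
    rcases hx with h | h
    · rw [h]; exact Or.inl (iota_gz 0)
    · rw [h]; exact Or.inr (iota_gz 1)
  | one => rw [map_one]; exact Submonoid.one_mem _
  | mul x y _ _ hx hy => rw [map_mul]; exact Submonoid.mul_mem _ hx hy

lemma neg_of_pos_iota {g : DA m} (h : posElt m (iota m g)) : negElt m g := by
  simpa [iota_iota] using neg_iota h

lemma len_gz_inv_Delta (hm : 3 ≤ m) (x : ZMod 2) : ℓD m ((gz m x)⁻¹ * Delta m) ≤ m - 1 := by
  obtain ⟨n, rfl⟩ : ∃ n, m = n + 1 := ⟨m - 1, by omega⟩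
  rw [← alt_m x, alt_succ, inv_mul_cancel_left]
  exact len_alt _ _ _

/-- If `h` is not positive, then `Δ` partially cancels in `h Δ`. -/
lemma len_mul_Delta_lt (hm : 3 ≤ m) {h : DA m} (hh : ¬ posElt m h) :
    ℓD m (h * Delta m) + 2 ≤ ℓD m h + m := by
  obtain ⟨p, q, x, rfl, h2⟩ := not_pos_split hh
  have e : p * (gz m x)⁻¹ * q * Delta m =
      p * ((gz m x)⁻¹ * Delta m) * (Delta m ^ (-1 : ℤ) * q * (Delta m ^ (-1 : ℤ))⁻¹) := by
    simp [mul_assoc]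
  have h3 := len_conj (-1) q
  have h4 := len_gz_inv_Delta hm x
  have h5 := len_mul (p * ((gz m x)⁻¹ * Delta m)) (Delta m ^ (-1 : ℤ) * q * (Delta m ^ (-1 : ℤ))⁻¹)
  have h6 := len_mul p ((gz m x)⁻¹ * Delta m)
  rw [← e] at h5
  omega

lemma pos_of_geo_Delta (hm : 3 ≤ m) {h : DA m} {d : ℕ} (hd : 0 < d)
    (hl : ℓD m h + d * m ≤ ℓD m (h * Delta m ^ d)) : posElt m (h * Delta m ^ d) := by
  by_cases hp : posElt m h
  · exact posElt_mul hp (posElt_Delta_pow d)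
  · exfalso
    obtain ⟨n, rfl⟩ : ∃ n, d = n + 1 := ⟨d - 1, by omega⟩
    rw [pow_succ', ← mul_assoc] at hl
    have h1 := len_mul (h * Delta m) (Delta m ^ n)
    have h2 := len_mul_Delta_lt hm hp
    rw [len_Delta_pow] at h1
    rw [Nat.succ_mul] at hl
    omega

/-- `g` has no geodesic factorisation through a nontrivial power of `Δ`. -/
def NoDelta (g : DA m) : Prop := ∀ (p q : DA m) (d : ℤ), g = p * Delta m ^ d * q →
  ℓD m p + ℓD m (Delta m ^ d) + ℓD m q ≤ ℓD m g → d = 0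

lemma noDelta_unsigned (hm : 3 ≤ m) {g : DA m} (hg : ¬ (posElt m g ∨ negElt m g)) : NoDelta g := by
  intro p q d he hl
  by_contra hd
  apply hg
  set h := p * (Delta m ^ d * q * (Delta m ^ d)⁻¹) with hh
  have hgh : g = h * Delta m ^ d := by rw [he, hh]; simp [mul_assoc]
  have hlh : ℓD m h ≤ ℓD m p + ℓD m q := by
    have := len_mul p (Delta m ^ d * q * (Delta m ^ d)⁻¹)
    rwa [len_conj] at this
  rcases lt_or_gt_of_ne hd with h0 | h0
  · right
    obtain ⟨n, hn⟩ : ∃ n : ℕ, d = -(n : ℤ) := ⟨d.natAbs, by omega⟩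
    have e1 : iota m g = iota m h * Delta m ^ n := by
      rw [hgh, map_mul, map_zpow, iota_Delta, hn]; simp
    apply neg_of_pos_iota
    rw [e1]
    apply pos_of_geo_Delta hm (by omega)
    rw [← e1, len_iota, len_iota]
    have : ℓD m (Delta m ^ d) = n * m := by
      rw [hn, zpow_neg, len_inv, zpow_natCast, len_Delta_pow]
    omega
  · left
    obtain ⟨n, hn⟩ : ∃ n : ℕ, d = (n : ℤ) := ⟨d.natAbs, by omega⟩
    subst hn
    rw [zpow_natCast] at hgh hl
    rw [len_Delta_pow] at hl
    rw [hgh]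
    apply pos_of_geo_Delta hm (by omega)
    rw [← hgh]; omega

end alg
/-! ### The cactus model -/

/-- Vertices of the cactus of `m`-gons. -/
abbrev Vx (m : ℕ) := {z : ℤ // 0 ≤ z ∧ z < m} × List {z : ℤ // 0 < z ∧ z < m}

section model
set_option linter.unusedSectionVars false
variable {m : ℕ} [hm : Fact (3 ≤ m)]

lemma mpos (m : ℕ) [hm : Fact (3 ≤ m)] : (0 : ℤ) < m := by have := hm.out; omega

/-- parity of the mover of a vertex -/
def eps : Vx m → ZMod 2
  | (r, L) => (r.1 : ZMod 2) + (L.map (fun n => (n.1 : ZMod 2) + 1)).sum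

/-- start letter of a polygon -/
def stt : Option (Vx m) → ZMod 2
  | none => 0
  | some v => eps v + 1

/-- vertex at position `J` of a polygon -/
def pos (Q : Option (Vx m)) (J : ℤ) : Vx m :=
  match Q with
  | none => (⟨J % m, Int.emod_nonneg _ (mpos m).ne', Int.emod_lt_of_pos _ (mpos m)⟩, [])
  | some v => if h : J % m = 0 then v else
      (v.1, ⟨J % m, lt_of_le_of_ne (Int.emod_nonneg _ (mpos m).ne') (Ne.symm h),
        Int.emod_lt_of_pos _ (mpos m)⟩ :: v.2)

def pt (Q : Option (Vx m)) (J : ℤ) : Vx m × ℤ := (pos Q J, J / m)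

/-- the top polygon of a vertex and its position on it -/
def own : Vx m → Option (Vx m) × ℤ
  | (r, []) => (none, r.1)
  | (r, n :: L) => (some (r, L), n.1)

def loc (x : ZMod 2) (s : Vx m × ℤ) : Option (Vx m) × ℤ :=
  if x = eps s.1 + (m : ZMod 2) * (s.2 : ZMod 2) then ((own s.1).1, (own s.1).2 + m * s.2)
  else (some s.1, m * s.2)

lemma emod_aux (a c : ℤ) (h0 : 0 ≤ a) (h1 : a < m) : (a + m * c) % m = a := by
  rw [Int.add_mul_emod_self_left]; exact Int.emod_eq_of_lt h0 h1

lemma ediv_aux (a c : ℤ) (h0 : 0 ≤ a) (h1 : a < m) : (a + m * c) / m = c := by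
  rw [Int.add_mul_ediv_left _ _ (mpos m).ne', Int.ediv_eq_zero_of_lt h0 h1, zero_add]

lemma pt_own (v : Vx m) (c : ℤ) : pt (own v).1 ((own v).2 + m * c) = (v, c) := by
  obtain ⟨r, L⟩ := v
  cases L with
  | nil =>
    have h1 := emod_aux r.1 c r.2.1 r.2.2
    have h2 := ediv_aux r.1 c r.2.1 r.2.2
    simp only [pt, own, pos, h1, h2]
  | cons n L =>
    have h1 := emod_aux n.1 c n.2.1.le n.2.2
    have h2 := ediv_aux n.1 c n.2.1.le n.2.2
    have h3 : n.1 ≠ 0 := n.2.1.ne'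
    simp only [pt, own, pos, h1, h2, h3, dif_neg, not_false_eq_true]

lemma pt_some (v : Vx m) (c : ℤ) : pt (some v) (m * c) = (v, c) := by
  have h1 := emod_aux (m := m) 0 c le_rfl (mpos m)
  have h2 := ediv_aux (m := m) 0 c le_rfl (mpos m)
  rw [zero_add] at h1 h2
  simp only [pt, pos, h1, h2, dif_pos]

lemma pt_loc (x : ZMod 2) (s : Vx m × ℤ) : pt (loc x s).1 (loc x s).2 = s := by
  unfold loc
  split_ifs
  · exact pt_own s.1 s.2
  · exact pt_some s.1 s.2

lemma stt_own (v : Vx m) : stt (own v).1 + ((own v).2 : ZMod 2) = eps v := by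
  obtain ⟨r, L⟩ := v
  cases L with
  | nil => simp [own, stt, eps]
  | cons n L => simp [own, stt, eps]; ring

lemma stt_loc (x : ZMod 2) (s : Vx m × ℤ) : stt (loc x s).1 + ((loc x s).2 : ZMod 2) = x := by
  unfold loc
  split_ifs with h
  · rw [h]; push_cast; rw [← add_assoc, stt_own]
  · have := fin2_ne (Ne.symm h)
    rw [this]; simp [stt]; ring

lemma loc_pt (Q : Option (Vx m)) (J : ℤ) (x : ZMod 2) (hx : x = stt Q + J) :
    loc x (pt Q J) = (Q, J) := by
  have hJ : J % m + m * (J / m) = J := Int.emod_add_mul_ediv J m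
  have hJ2 : (J : ZMod 2) = ((J % m : ℤ) : ZMod 2) + (m : ZMod 2) * ((J / m : ℤ) : ZMod 2) := by
    conv_lhs => rw [← hJ]
    push_cast; ring
  cases Q with
  | none =>
    unfold loc
    rw [if_pos]
    · simp only [pt, pos, own, hJ]
    · simp [hx, pt, pos, eps, stt, hJ2]
  | some v =>
    by_cases h : J % m = 0
    · unfold loc
      have e : m * (J / m) = J := by rw [h] at hJ; simpa using hJ
      rw [if_neg]
      · simp only [pt, pos, h, dif_pos, e]
      · simp only [pt, pos, h, dif_pos, hx, stt, hJ2, Int.cast_zero]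
        intro h'
        have : (1 : ZMod 2) = 0 := by linear_combination h'
        exact absurd this (by decide)
    · unfold loc
      rw [if_pos]
      · simp only [pt, pos, h, dif_neg, not_false_eq_true, own, hJ]
      · simp only [pt, pos, h, dif_neg, not_false_eq_true, hx, stt, hJ2, eps, List.map_cons,
          List.sum_cons]
        ring

/-- right multiplication by a generator on states -/
def Rp (x : ZMod 2) : Equiv.Perm (Vx m × ℤ) where
  toFun s := pt (loc x s).1 ((loc x s).2 + 1)
  invFun s := pt (loc (x + 1) s).1 ((loc (x + 1) s).2 - 1)
  left_inv s := by
    have h := stt_loc x s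
    dsimp only
    rw [loc_pt _ _ (x + 1) (by push_cast; rw [← add_assoc, h])]
    simp [pt_loc]
  right_inv s := by
    have h := stt_loc (x + 1) s
    dsimp only
    rw [loc_pt _ _ x (by push_cast; rw [← add_sub_assoc, h]; ring)]
    simp [pt_loc]

lemma Rp_pt (Q : Option (Vx m)) (J : ℤ) (x : ZMod 2) (hx : x = stt Q + J) :
    Rp x (pt Q J) = pt Q (J + 1) := by
  change pt _ _ = _
  rw [loc_pt Q J x hx]

lemma Rp_symm_pt (Q : Option (Vx m)) (J : ℤ) (x : ZMod 2) (hx : x = stt Q + J) :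
    (Rp x).symm (pt Q (J + 1)) = pt Q J := by
  rw [Equiv.symm_apply_eq, Rp_pt Q J x hx]

lemma altRp (n : ℕ) (Q : Option (Vx m)) : ∀ (J : ℤ) (x : ZMod 2) (_ : x = stt Q + J),
    (altProd n (MulOpposite.op (Rp (m := m) x)) (MulOpposite.op (Rp (x + 1)))).unop (pt Q J) =
      pt Q (J + n) := by
  induction n with
  | zero => intro J x hx; simp [altProd]
  | succ n ih =>
    intro J x hx
    have := ih (J + 1) (x + 1) (by rw [hx]; push_cast; ring)
    rw [z2_add_one_one] at this
    rw [altProd, MulOpposite.unop_mul, Equiv.Perm.mul_apply, MulOpposite.unop_op,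
      Rp_pt Q J x hx, this]
    congr 1; push_cast; ring

lemma pos_add_m (Q : Option (Vx m)) (J : ℤ) : pt Q (J + m) = ((pt Q J).1, (pt Q J).2 + 1) := by
  have h1 : (J + m) % m = J % m := by simp
  have h2 : (J + m) / m = J / m + 1 := by
    rw [Int.add_ediv_of_dvd_right (dvd_refl _), Int.ediv_self (mpos m).ne']
  cases Q with
  | none => simp only [pt, pos, h1, h2]
  | some v =>
    by_cases h : J % m = 0 <;> simp [pt, pos, h1, h2, h]

lemma altRp_m (x : ZMod 2) (s : Vx m × ℤ) :
    (altProd m (MulOpposite.op (Rp (m := m) x)) (MulOpposite.op (Rp (x + 1)))).unop s =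
      (s.1, s.2 + 1) := by
  have := altRp m (loc x s).1 (loc x s).2 x (stt_loc x s).symm
  rw [pt_loc] at this
  rw [this, pos_add_m, pt_loc]

variable (m) in
/-- the right action as a homomorphism to the opposite of the permutation group -/
def phi : DA m →* (Equiv.Perm (Vx m × ℤ))ᵐᵒᵖ := DAlift (fun x => MulOpposite.op (Rp x)) (by
  apply MulOpposite.unop_injective
  ext1 s
  have h0 := altRp_m 0 s
  have h1 := altRp_m 1 s
  rw [zero_add] at h0
  rw [show (1 : ZMod 2) + 1 = 0 from rfl] at h1
  rw [h0, h1])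

def act (s : Vx m × ℤ) (g : DA m) : Vx m × ℤ := (phi m g).unop s

lemma act_mul (s : Vx m × ℤ) (g h : DA m) : act s (g * h) = act (act s g) h := by
  simp [act]

lemma act_one (s : Vx m × ℤ) : act s 1 = s := by simp [act]

lemma act_gz (s : Vx m × ℤ) (x : ZMod 2) : act s (gz m x) = Rp x s := by
  simp [act, phi, DAlift_gz]

lemma act_gz_inv (s : Vx m × ℤ) (x : ZMod 2) : act s (gz m x)⁻¹ = (Rp x).symm s := by
  simp [act, phi, DAlift_gz]

/-- one step stays in a polygon -/
lemma act_step (s : Vx m × ℤ) {a : DA m} (ha : a ∈ genSet 2 (DMat m)) :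
    ∃ (Q : Option (Vx m)) (J J' : ℤ), s = pt Q J ∧ act s a = pt Q J' := by
  obtain ⟨x, rfl | rfl⟩ := mem_genSet.1 ha
  · refine ⟨_, _, (loc x s).2 + 1, (pt_loc x s).symm, ?_⟩
    rw [act_gz]; rfl
  · refine ⟨_, _, (loc (x + 1) s).2 - 1, (pt_loc (x + 1) s).symm, ?_⟩
    rw [act_gz_inv]; rfl

/-! normal forms -/

def WV : Vx m → DA m
  | (r, []) => alt m r.1.toNat 0
  | (r, n :: L) => WV (r, L) * alt m n.1.toNat (eps (r, L) + 1)
termination_by v => v.2.length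

def WQ : Option (Vx m) → DA m
  | none => 1
  | some v => WV v

def nf (s : Vx m × ℤ) : DA m := WV s.1 * Delta m ^ s.2

lemma nf_pt (Q : Option (Vx m)) (J : ℤ) :
    nf (pt Q J) = WQ Q * alt m (J % m).toNat (stt Q) * Delta m ^ (J / m) := by
  cases Q with
  | none => simp [nf, pt, pos, WQ, stt, WV]
  | some v =>
    obtain ⟨r, L⟩ := v
    by_cases h : J % m = 0
    · simp [nf, pt, pos, WQ, stt, h, alt_zero]
    · simp [nf, pt, pos, WQ, stt, h, WV]

lemma nf_pt_succ (Q : Option (Vx m)) (J : ℤ) :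
    nf (pt Q (J + 1)) = nf (pt Q J) * gz m (stt Q + J) := by
  have hJ : J % m + m * (J / m) = J := Int.emod_add_mul_ediv J m
  have h0 : 0 ≤ J % m := Int.emod_nonneg _ (mpos m).ne'
  have h1 : J % m < m := Int.emod_lt_of_pos _ (mpos m)
  rw [nf_pt, nf_pt, mul_assoc _ (Delta m ^ _), Delta_zpow_gz]
  have e : stt Q + (J : ZMod 2) + (m : ZMod 2) * ((J / m : ℤ) : ZMod 2) =
      stt Q + ((J % m).toNat : ZMod 2) := by
    have a1 : (J : ZMod 2) = ((J % m : ℤ) : ZMod 2) + (m : ZMod 2) * ((J / m : ℤ) : ZMod 2) := by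
      conv_lhs => rw [← hJ]
      push_cast; ring
    have a2 : (((J % m).toNat : ℕ) : ZMod 2) = ((J % m : ℤ) : ZMod 2) := by
      conv_rhs => rw [← Int.toNat_of_nonneg h0]
      push_cast; rfl
    rw [a2, a1]
    have := z2_dbl ((m : ZMod 2) * ((J / m : ℤ) : ZMod 2))
    linear_combination this
  rw [e, ← mul_assoc, mul_assoc (WQ Q) (alt m (J % m).toNat (stt Q)), ← alt_succ']
  by_cases h : J % m = m - 1
  · have b1 : (J + 1) = 0 + m * (J / m + 1) := by rw [mul_add]; omega
    have b2 : (J + 1) % m = 0 := by rw [b1]; exact emod_aux 0 _ le_rfl (mpos m)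
    have b3 : (J + 1) / m = J / m + 1 := by
      conv_lhs => rw [b1]
      exact ediv_aux 0 _ le_rfl (mpos m)
    have b4 : (J % m).toNat + 1 = m := by omega
    rw [b2, b3, b4, alt_m, Int.toNat_zero, alt_zero, mul_one, mul_assoc, zpow_add_one,
      (Commute.zpow_self (Delta m) (J / m)).eq]
  · have b1 : (J + 1) = (J % m + 1) + m * (J / m) := by omega
    have b2 : (J + 1) % m = J % m + 1 := by
      conv_lhs => rw [b1]
      exact emod_aux _ _ (by omega) (by omega)
    have b3 : (J + 1) / m = J / m := by
      conv_lhs => rw [b1]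
      exact ediv_aux _ _ (by omega) (by omega)
    have b4 : (J % m + 1).toNat = (J % m).toNat + 1 := by omega
    rw [b2, b3, b4]

lemma nf_Rp (x : ZMod 2) (s : Vx m × ℤ) : nf (Rp x s) = nf s * gz m x := by
  have h := nf_pt_succ (loc x s).1 (loc x s).2
  rw [pt_loc, stt_loc] at h
  exact h

lemma nf_act (g : DA m) : ∀ s : Vx m × ℤ, nf (act s g) = nf s * g := by
  induction g using DA_induction with
  | one => simp [act_one]
  | mul g h ihg ihh => intro s; rw [act_mul, ihh, ihg, mul_assoc]
  | inv g ih =>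
    intro s
    have := ih (act s g⁻¹)
    rw [← act_mul, inv_mul_cancel, act_one] at this
    rw [this, mul_inv_cancel_right]
  | gn x => intro s; rw [act_gz, nf_Rp]

variable (m) in
def base : Vx m × ℤ := ((⟨0, le_rfl, mpos m⟩, []), 0)

lemma nf_base (g : DA m) : nf (act (base m) g) = g := by
  rw [nf_act]; simp [nf, base, WV, alt_zero]

/-- vertex of a group element -/
def vert (g : DA m) : Vx m := (act (base m) g).1

lemma vert_form (g : DA m) : ∃ c : ℤ, g = WV (vert g) * Delta m ^ c :=
  ⟨(act (base m) g).2, (nf_base g).symm⟩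

lemma vert_eq {g h : DA m} (e : vert g = vert h) : ∃ d : ℤ, h = g * Delta m ^ d := by
  obtain ⟨c, hc⟩ := vert_form g
  obtain ⟨c', hc'⟩ := vert_form h
  rw [e] at hc
  refine ⟨c' - c, ?_⟩
  generalize WV (vert h) = u at hc hc'
  rw [hc, hc', mul_assoc, ← zpow_add]
  congr 2; ring

lemma vert_lam_inj {g h : DA m} (e : vert g = vert h) (hl : lam g = lam h) : g = h := by
  obtain ⟨d, rfl⟩ := vert_eq e
  rw [lam_mul, lam_zpow, lam_Delta] at hl
  have : d * (m : ℤ) = 0 := by linarith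
  rcases mul_eq_zero.1 this with h | h
  · simp [h]
  · exact absurd h (mpos m).ne'

end model
section paths
set_option linter.unusedSectionVars false
variable {m : ℕ} [hm : Fact (3 ≤ m)]

/-- depth of a state -/
def dep (s : Vx m × ℤ) : ℕ := s.1.2.length

/-- mover letter of a state -/
def mv (s : Vx m × ℤ) : ZMod 2 := eps s.1 + (m : ZMod 2) * (s.2 : ZMod 2)

lemma pos_cases (v : Vx m) (J : ℤ) : pos (some v) J = v ∨ ∃ n, pos (some v) J = (v.1, n :: v.2) := by
  by_cases h : J % m = 0
  · left; simp [pos, h]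
  · right; exact ⟨_, by simp only [pos, h, dif_neg, not_false_eq_true]; rfl⟩

lemma dep_step (s : Vx m × ℤ) {a : DA m} (ha : a ∈ genSet 2 (DMat m)) :
    dep (act s a) ≤ dep s + 1 := by
  obtain ⟨Q, J, J', h1, h2⟩ := act_step s ha
  rw [h2, h1]
  cases Q with
  | none => simp [dep, pt, pos]
  | some v =>
    simp only [dep, pt]
    rcases pos_cases v J with h | ⟨n, h⟩ <;> rcases pos_cases v J' with h' | ⟨n', h'⟩ <;>
      rw [h, h'] <;> (try simp only [List.length_cons]) <;> omega

lemma dep_list (w : List (DA m)) : ∀ (s : Vx m × ℤ) (_ : ∀ a ∈ w, a ∈ genSet 2 (DMat m)),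
    dep (act s w.prod) ≤ dep s + w.length := by
  induction w with
  | nil => intro s _; simp [act_one]
  | cons a w ih =>
    intro s hw
    rw [List.prod_cons, act_mul, List.length_cons]
    have h1 := ih (act s a) (fun b hb => hw b (List.mem_cons_of_mem _ hb))
    have h2 := dep_step s (hw a List.mem_cons_self)
    omega

lemma dep_le (s : Vx m × ℤ) (g : DA m) : dep (act s g) ≤ dep s + ℓD m g := by
  obtain ⟨w, hw, h1, h2⟩ := len_geo g
  have := dep_list w s hw
  rwa [h1, h2] at this

lemma pt_some_r (v : Vx m) (r c : ℤ) (h0 : 0 < r) (h1 : r < m) :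
    dep (pt (some v) (r + m * c)) = v.2.length + 1 ∧
    mv (pt (some v) (r + m * c)) = eps v + 1 + r + (m : ZMod 2) * (c : ZMod 2) := by
  have e1 := emod_aux r c h0.le h1
  have e2 := ediv_aux r c h0.le h1
  have h : r ≠ 0 := h0.ne'
  constructor
  · simp [dep, pt, pos, e1, h]
  · simp [mv, pt, pos, e1, h, eps, e2]; ring

lemma push_eq (s : Vx m × ℤ) (x : ZMod 2) (h : mv s ≠ x) :
    act s (gz m x) = pt (some s.1) (1 + m * s.2) := by
  have hx := fin2_ne h
  rw [act_gz]
  have h1 := Rp_pt (some s.1) (m * s.2) x (by rw [hx, mv]; push_cast; simp only [stt]; ring)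
  rw [pt_some] at h1
  rw [add_comm 1]; exact h1

lemma push_pos (s : Vx m × ℤ) (x : ZMod 2) (h : mv s ≠ x) :
    dep (act s (gz m x)) = dep s + 1 ∧ mv (act s (gz m x)) = mv s := by
  have h3 := hm.out
  have := pt_some_r s.1 1 s.2 one_pos (by omega)
  rw [push_eq s x h]
  refine ⟨this.1, this.2.trans ?_⟩
  rw [Int.cast_one, z2_add_one_one]; rfl

lemma push_two (s : Vx m × ℤ) (x : ZMod 2) (h : mv s ≠ x) :
    dep (act s (gz m x * gz m (x + 1))) = dep s + 1 ∧
      mv (act s (gz m x * gz m (x + 1))) = mv s + 1 := by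
  have h3 := hm.out
  have hx := fin2_ne h
  have := pt_some_r s.1 2 s.2 two_pos (by omega)
  have h1 := Rp_pt (some s.1) (1 + m * s.2) (x + 1)
    (by rw [hx, mv]; push_cast; simp only [stt]; ring)
  rw [act_mul, push_eq s x h, act_gz, h1, show 1 + m * s.2 + 1 = 2 + m * s.2 by ring]
  refine ⟨this.1, this.2.trans ?_⟩
  rw [show ((2 : ℤ) : ZMod 2) = 0 from rfl, mv]; ring

lemma push_neg' (s : Vx m × ℤ) (x : ZMod 2) (h : mv s = x) :
    dep (act s (gz m x)⁻¹) = dep s + 1 ∧ mv (act s (gz m x)⁻¹) = mv s := by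
  have h3 := hm.out
  have h1 := Rp_symm_pt (some s.1) (m * s.2 - 1) x
    (by rw [← h, mv]; push_cast; simp only [stt]; ring)
  rw [sub_add_cancel, pt_some, show (m : ℤ) * s.2 - 1 = (m - 1) + m * (s.2 - 1) by ring] at h1
  have := pt_some_r s.1 (m - 1) (s.2 - 1) (by omega) (by omega)
  rw [act_gz_inv]
  change (Rp x).symm s = _ at h1
  rw [h1]
  refine ⟨this.1, this.2.trans ?_⟩
  rw [mv]; push_cast; ring

lemma push_pos_pow (n : ℕ) (x : ZMod 2) : ∀ (s : Vx m × ℤ) (_ : mv s ≠ x),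
    dep (act s (gz m x ^ n)) = dep s + n ∧ mv (act s (gz m x ^ n)) = mv s := by
  induction n with
  | zero => intro s _; simp [act_one]
  | succ n ih =>
    intro s h
    rw [pow_succ, act_mul]
    obtain ⟨h1, h2⟩ := ih s h
    obtain ⟨h3, h4⟩ := push_pos (act s (gz m x ^ n)) x (by rwa [h2])
    exact ⟨by omega, h4.trans h2⟩

lemma push_neg_pow (n : ℕ) (x : ZMod 2) : ∀ (s : Vx m × ℤ) (_ : mv s = x),
    dep (act s ((gz m x)⁻¹ ^ n)) = dep s + n ∧ mv (act s ((gz m x)⁻¹ ^ n)) = mv s := by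
  induction n with
  | zero => intro s _; simp [act_one]
  | succ n ih =>
    intro s h
    rw [pow_succ, act_mul]
    obtain ⟨h1, h2⟩ := ih s h
    obtain ⟨h3, h4⟩ := push_neg' (act s ((gz m x)⁻¹ ^ n)) x (by rwa [h2])
    exact ⟨by omega, h4.trans h2⟩

variable (m) in
lemma exists_mv (e : ZMod 2) : ∃ s : Vx m × ℤ, mv s = e := by
  have h3 := hm.out
  rcases z2_cases e with rfl | rfl
  · exact ⟨base m, by simp [mv, base, eps]⟩
  · exact ⟨((⟨1, by omega, by omega⟩, []), 0), by simp [mv, eps]⟩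

lemma z2_ne (x : ZMod 2) : x + 1 ≠ x := by revert x; decide

lemma len_pos_neg (x : ZMod 2) (s t : ℕ) :
    s + t ≤ ℓD m (gz m x ^ s * (gz m (x + 1))⁻¹ ^ t) := by
  obtain ⟨σ, hσ⟩ := exists_mv m (x + 1)
  obtain ⟨h1, h2⟩ := push_pos_pow s x σ (by rw [hσ]; exact z2_ne x)
  obtain ⟨h3, h4⟩ := push_neg_pow t (x + 1) (act σ (gz m x ^ s)) (h2.trans hσ)
  have := dep_le σ (gz m x ^ s * (gz m (x + 1))⁻¹ ^ t)
  rw [act_mul] at this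
  omega

lemma len_neg_pos (x : ZMod 2) (s t : ℕ) :
    s + t ≤ ℓD m ((gz m x)⁻¹ ^ s * gz m (x + 1) ^ t) := by
  obtain ⟨σ, hσ⟩ := exists_mv m x
  obtain ⟨h1, h2⟩ := push_neg_pow s x σ hσ
  obtain ⟨h3, h4⟩ := push_pos_pow t (x + 1) (act σ ((gz m x)⁻¹ ^ s))
    (by rw [h2, hσ]; exact (z2_ne x).symm)
  have := dep_le σ ((gz m x)⁻¹ ^ s * gz m (x + 1) ^ t)
  rw [act_mul] at this
  omega

/-- three-syllable estimate -/
lemma len_three (x : ZMod 2) (s j : ℕ) (hj : 0 < j) :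
    2 * (s + j) ≤ ℓD m (gz m x ^ s * gz m (x + 1) ^ j * (gz m x)⁻¹ ^ (s + j)) + 1 := by
  rcases Nat.eq_zero_or_pos s with rfl | hs
  · have := len_pos_neg (m := m) (x + 1) j j
    rw [z2_add_one_one] at this
    rw [pow_zero, one_mul, zero_add]; omega
  · obtain ⟨σ, hσ⟩ := exists_mv m (x + 1)
    obtain ⟨s, rfl⟩ : ∃ n, s = n + 1 := ⟨s - 1, by omega⟩
    obtain ⟨j, rfl⟩ : ∃ n, j = n + 1 := ⟨j - 1, by omega⟩
    obtain ⟨h1, h2⟩ := push_pos_pow s x σ (by rw [hσ]; exact z2_ne x)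
    obtain ⟨h3, h4⟩ := push_two (act σ (gz m x ^ s)) x (by rw [h2, hσ]; exact z2_ne x)
    rw [h2, hσ, z2_add_one_one] at h4
    obtain ⟨h5, h6⟩ := push_pos_pow j (x + 1) _ (by rw [h4]; exact (z2_ne x).symm)
    obtain ⟨h7, h8⟩ := push_neg_pow (s + 1 + (j + 1)) x _ (h6.trans h4)
    have := dep_le σ (gz m x ^ (s + 1) * gz m (x + 1) ^ (j + 1) * (gz m x)⁻¹ ^ (s + 1 + (j + 1)))
    have e : gz m x ^ (s + 1) * gz m (x + 1) ^ (j + 1) * (gz m x)⁻¹ ^ (s + 1 + (j + 1)) =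
        gz m x ^ s * ((gz m x * gz m (x + 1)) *
          (gz m (x + 1) ^ j * (gz m x)⁻¹ ^ (s + 1 + (j + 1)))) := by
      rw [pow_succ, pow_succ' (gz m (x + 1))]; simp only [mul_assoc]
    rw [e] at this ⊢
    rw [act_mul, act_mul, act_mul] at this
    omega

/-! crossing -/

def Anc (p u : Vx m) : Prop := p.1 = u.1 ∧ p.2 <:+ u.2 ∧ p.2.length < u.2.length

lemma anc_cross (p : Vx m) (Q : Option (Vx m)) (J J' : ℤ) (h : Anc p (pos Q J))
    (h' : ¬ Anc p (pos Q J')) : pos Q J' = p := by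
  cases Q with
  | none => simp [Anc, pos] at h
  | some v =>
    have key : ∀ n, Anc p (v.1, n :: v.2) → ¬ Anc p v → v = p := by
      rintro n ⟨a1, a2, a3⟩ hv
      have a2' : p.2 <:+ v.2 := by
        rcases List.suffix_cons_iff.1 a2 with e | e
        · rw [e] at a3; simp at a3
        · exact e
      have : ¬ p.2.length < v.2.length := fun hl => hv ⟨a1, a2', hl⟩
      have e2 : p.2 = v.2 := a2'.eq_of_length (le_antisymm a2'.length_le (by omega))
      have a1' : p.1 = v.1 := a1
      exact (Prod.ext a1' e2).symm
    have up : ∀ n, Anc p v → Anc p (v.1, n :: v.2) := by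
      rintro n ⟨a1, a2, a3⟩
      exact ⟨a1, a2.trans (List.suffix_cons _ _), by simp; omega⟩
    have up2 : ∀ n n', Anc p (v.1, n :: v.2) → Anc p (v.1, n' :: v.2) := by
      rintro n n' ⟨a1, a2, a3⟩
      rcases List.suffix_cons_iff.1 a2 with e | e
      · rw [e] at a3; simp at a3
      · exact ⟨a1, e.trans (List.suffix_cons _ _), by simpa using a3⟩
    rcases pos_cases v J with e | ⟨n, e⟩ <;> rcases pos_cases v J' with e' | ⟨n', e'⟩ <;>
      rw [e] at h <;> rw [e'] at h' ⊢
    · exact absurd h h'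
    · exact absurd (up _ h) h'
    · exact key n h h'
    · exact absurd (up2 _ _ h) h'

lemma cross_list (p : Vx m) (w : List (DA m)) : ∀ (g : DA m)
    (_ : ∀ a ∈ w, a ∈ genSet 2 (DMat m))
    (_ : ¬ (Anc p (vert g) ↔ Anc p (vert (g * w.prod)))),
    ∃ w1 w2, w = w1 ++ w2 ∧ vert (g * w1.prod) = p := by
  induction w with
  | nil => intro g _ h; simp at h
  | cons a w ih =>
    intro g hw h
    by_cases hc : Anc p (vert g) ↔ Anc p (vert (g * a))
    · obtain ⟨w1, w2, h1, h2⟩ := ih (g * a) (fun b hb => hw b (List.mem_cons_of_mem _ hb))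
        (by rw [← hc]; simpa [mul_assoc] using h)
      exact ⟨a :: w1, w2, by simp [h1], by simpa [mul_assoc] using h2⟩
    · obtain ⟨Q, J, J', e1, e2⟩ := act_step (act (base m) g) (hw a List.mem_cons_self)
      rw [← act_mul] at e2
      have f1 : vert g = pos Q J := congrArg Prod.fst e1
      have f2 : vert (g * a) = pos Q J' := congrArg Prod.fst e2
      by_cases ha : Anc p (vert g)
      · have hb : ¬ Anc p (vert (g * a)) := fun hb => hc ⟨fun _ => hb, fun _ => ha⟩
        refine ⟨[a], w, rfl, ?_⟩
        rw [f1] at ha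
        rw [f2] at hb
        simpa [f2] using anc_cross p Q J J' ha hb
      · have hb : Anc p (vert (g * a)) := by
          by_contra hb
          exact hc ⟨fun h => absurd h ha, fun h => absurd h hb⟩
        refine ⟨[], a :: w, rfl, ?_⟩
        rw [f1] at ha
        rw [f2] at hb
        simpa [f1] using anc_cross p Q J' J hb ha

lemma cross (p : Vx m) (g h : DA m) (hc : ¬ (Anc p (vert g) ↔ Anc p (vert (g * h)))) :
    ∃ h1 h2, h = h1 * h2 ∧ ℓD m h1 + ℓD m h2 ≤ ℓD m h ∧ vert (g * h1) = p := by
  obtain ⟨w, hw, e1, e2⟩ := len_geo h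
  rw [← e2] at hc
  obtain ⟨w1, w2, f1, f2⟩ := cross_list p w g hw hc
  refine ⟨w1.prod, w2.prod, by rw [← e2, f1, List.prod_append], ?_, f2⟩
  have a1 := len_prod_le w1 (fun a ha => hw a (by simp [f1, ha]))
  have a2 := len_prod_le w2 (fun a ha => hw a (by simp [f1, ha]))
  rw [← e1, f1, List.length_append]; omega

lemma anc_base (p : Vx m) : ¬ Anc p (vert (1 : DA m)) := by
  simp [Anc, vert, act_one, base]

/-- a left divisor of an element without `Δ`-factors lies on the chain of that element -/
lemma on_chain {g g1 : DA m} (hg : NoDelta g) (hl : ℓD m g1 + ℓD m (g1⁻¹ * g) = ℓD m g)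
    {n : {z : ℤ // 0 < z ∧ z < (m : ℤ)}} {L : List {z : ℤ // 0 < z ∧ z < (m : ℤ)}}
    (hv : (vert g1).2 = n :: L) : (vert g1).1 = (vert g).1 ∧ L <:+ (vert g).2 := by
  set p : Vx m := ((vert g1).1, L) with hp
  have hA : Anc p (vert g1) := ⟨rfl, by rw [hv]; exact List.suffix_cons _ _, by rw [hv]; simp [hp]⟩
  by_cases hB : Anc p (vert g)
  · exact ⟨hB.1, hB.2.1⟩
  · exfalso
    obtain ⟨h1, h2, e1, l1, v1⟩ := cross p 1 g1 (by
      rw [one_mul]; intro h; exact anc_base p (h.2 hA))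
    obtain ⟨h3, h4, e2, l2, v2⟩ := cross p g1 (g1⁻¹ * g) (by
      rw [mul_inv_cancel_left]; intro h; exact hB (h.1 hA))
    rw [one_mul] at v1
    obtain ⟨d, hd⟩ := vert_eq (v1.trans v2.symm)
    have hd' : h2 * h3 = Delta m ^ d := by
      rw [e1, mul_assoc] at hd
      exact mul_left_cancel hd
    have h23 := len_mul h2 h3
    have hd0 : d = 0 := by
      apply hg h1 h4 d
      · rw [← hd', show h1 * (h2 * h3) * h4 = (h1 * h2) * (h3 * h4) by simp only [mul_assoc],
          ← e1, ← e2, mul_inv_cancel_left]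
      · rw [← hd']; omega
    have hlg : ℓD m g ≤ ℓD m h1 + ℓD m h4 := by
      have : g = h1 * h4 := by
        rw [hd0, zpow_zero] at hd'
        rw [show h1 * h4 = h1 * (h2 * h3) * h4 by rw [hd', mul_one],
          show h1 * (h2 * h3) * h4 = (h1 * h2) * (h3 * h4) by simp only [mul_assoc],
          ← e1, ← e2, mul_inv_cancel_left]
      rw [this]; exact len_mul _ _
    have : h2 = 1 := len_eq_zero (by omega)
    rw [this, mul_one] at e1
    rw [← e1] at v1
    rw [v1] at hA
    exact absurd hA.2.2 (lt_irrefl _)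

end paths
section counting
set_option linter.unusedSectionVars false
variable {m : ℕ}

/-- `S` is contained in a finite set with at most `n` elements -/
def Cov (S : Set (DA m)) (n : ℕ) : Prop := ∃ F : Finset (DA m), S ⊆ ↑F ∧ F.card ≤ n

lemma Cov.mono {S T : Set (DA m)} {n k : ℕ} (h : Cov T n) (hS : S ⊆ T) (hn : n ≤ k) : Cov S k := by
  obtain ⟨F, h1, h2⟩ := h
  exact ⟨F, hS.trans h1, h2.trans hn⟩

open Classical in
lemma Cov.union {S T : Set (DA m)} {n k : ℕ} (h : Cov S n) (h' : Cov T k) :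
    Cov (S ∪ T) (n + k) := by
  obtain ⟨F, h1, h2⟩ := h
  obtain ⟨F', h1', h2'⟩ := h'
  refine ⟨F ∪ F', ?_, (Finset.card_union_le _ _).trans (by omega)⟩
  rw [Finset.coe_union]
  exact Set.union_subset_union h1 h1'

open Classical in
lemma Cov.image {S : Set (DA m)} {n : ℕ} (f : DA m → DA m) (h : Cov S n) : Cov (f '' S) n := by
  obtain ⟨F, h1, h2⟩ := h
  refine ⟨F.image f, ?_, Finset.card_image_le.trans h2⟩
  rw [Finset.coe_image]
  exact Set.image_mono h1

open Classical in
lemma Cov.iUnion {ι : Type*} (I : Finset ι) {S : ι → Set (DA m)} {n : ℕ}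
    (h : ∀ i ∈ I, Cov (S i) n) : Cov (⋃ i ∈ I, S i) (I.card * n) := by
  have : ∀ i, ∃ F : Finset (DA m), i ∈ I → S i ⊆ ↑F ∧ F.card ≤ n := by
    intro i
    by_cases hi : i ∈ I
    · obtain ⟨F, hF⟩ := h i hi
      exact ⟨F, fun _ => hF⟩
    · exact ⟨∅, fun h => absurd h hi⟩
  choose F hF using this
  refine ⟨I.biUnion F, ?_, Finset.card_biUnion_le_card_mul _ _ _ (fun i hi => (hF i hi).2)⟩
  intro g hg
  simp only [Set.mem_iUnion] at hg
  obtain ⟨i, hi, hg⟩ := hg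
  simp only [Finset.coe_biUnion, Set.mem_iUnion]
  exact ⟨i, hi, (hF i hi).1 hg⟩

open Classical in
lemma cov_param {ι : Type*} (I : Finset ι) (f : ι → DA m) {S : Set (DA m)}
    (h : ∀ g ∈ S, ∃ i ∈ I, f i = g) : Cov S I.card := by
  refine ⟨I.image f, ?_, Finset.card_image_le⟩
  intro g hg
  rw [Finset.mem_coe, Finset.mem_image]
  exact h g hg

lemma cov_inj {ι : Type*} (I : Finset ι) (f : DA m → ι) {S : Set (DA m)}
    (h : ∀ g ∈ S, f g ∈ I) (hi : ∀ g ∈ S, ∀ g' ∈ S, f g = f g' → g = g') : Cov S I.card := by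
  have hI : Set.InjOn f S := fun a ha b hb e => hi a ha b hb e
  have hf : S.Finite := Set.Finite.of_finite_image
    (I.finite_toSet.subset (by rintro _ ⟨g, hg, rfl⟩; exact h g hg)) hI
  refine ⟨hf.toFinset, by simp, Finset.card_le_card_of_injOn f ?_ ?_⟩
  · intro g hg; exact h g (by simpa using hg)
  · simpa using hI

/-- left divisors of length `k` -/
def LD (g : DA m) (k : ℕ) : Set (DA m) :=
  {g1 | ℓD m g1 = k ∧ ℓD m g1 + ℓD m (g1⁻¹ * g) = ℓD m g}

def topv (v : Vx m) : ℤ := match v.2 with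
  | [] => v.1
  | n :: _ => n

variable [hm : Fact (3 ≤ m)]

lemma topv_mem (v : Vx m) : topv v ∈ Finset.Ico (0 : ℤ) m := by
  obtain ⟨⟨r, h0, h1⟩, L⟩ := v
  rw [Finset.mem_Ico]
  cases L with
  | nil => exact ⟨h0, h1⟩
  | cons n L => exact ⟨n.2.1.le, n.2.2⟩

lemma cov_chain {g : DA m} (hg : NoDelta g) (k : ℕ) : Cov (LD g k) ((k + 1) * (m * (2 * k + 1))) := by
  have := cov_inj (S := LD g k)
    (Finset.range (k + 1) ×ˢ (Finset.Ico (0 : ℤ) m ×ˢ Finset.Icc (-k : ℤ) k))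
    (fun g1 => ((vert g1).2.length, topv (vert g1), lam g1)) ?_ ?_
  · refine this.mono subset_rfl (le_of_eq ?_)
    rw [Finset.card_product, Finset.card_product, Finset.card_range, Int.card_Ico, Int.card_Icc]
    rw [show ((m : ℤ) - 0).toNat = m by omega,
      show ((k : ℤ) + 1 - -(k : ℤ)).toNat = 2 * k + 1 by omega]
  · rintro g1 ⟨h1, -⟩
    rw [Finset.mem_product, Finset.mem_product]
    refine ⟨?_, topv_mem _, ?_⟩
    · have := dep_le (base m) g1
      rw [h1] at this
      have e : dep (base m) = 0 := rfl
      have e' : dep (act (base m) g1) = (vert g1).2.length := rfl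
      rw [Finset.mem_range]
      change (vert g1).2.length < _
      omega
    · have := abs_le.1 (abs_lam_le g1)
      rw [h1] at this
      exact Finset.mem_Icc.2 this
  · rintro g1 ⟨-, h1⟩ g2 ⟨-, h2⟩ e
    simp only [Prod.mk.injEq] at e
    obtain ⟨e1, e2, e3⟩ := e
    refine vert_lam_inj ?_ e3
    have c1 := fun n L => on_chain (n := n) (L := L) hg h1
    have c2 := fun n L => on_chain (n := n) (L := L) hg h2
    generalize vert g1 = v1 at *
    generalize vert g2 = v2 at *
    obtain ⟨r1, L1⟩ := v1
    obtain ⟨r2, L2⟩ := v2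
    cases L1 with
    | nil =>
      cases L2 with
      | nil => exact Prod.ext (Subtype.ext e2) rfl
      | cons n L => simp at e1
    | cons n L =>
      cases L2 with
      | nil => simp at e1
      | cons n' L' =>
        obtain ⟨a1, b1⟩ := c1 n L rfl
        obtain ⟨a2, b2⟩ := c2 n' L' rfl
        have hl : L.length = L'.length := by simpa using e1
        have hL : L = L' := (List.suffix_of_suffix_length_le b1 b2 hl.le).eq_of_length hl
        have hn : n = n' := Subtype.ext e2
        exact Prod.ext (a1.trans a2.symm) (by rw [hL, hn])

lemma mem_letters {a : DA m} (h : a ∈ lettersDA m) : ∃ x, a = gz m x ∨ a = (gz m x)⁻¹ := by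
  rcases h with h | h | h | h
  · exact ⟨0, Or.inl h⟩
  · exact ⟨0, Or.inr h⟩
  · exact ⟨1, Or.inl h⟩
  · exact ⟨1, Or.inr h⟩

lemma gz_letters (x : ZMod 2) : gz m x ∈ lettersDA m := by
  rcases z2_cases x with rfl | rfl
  · exact Or.inl rfl
  · exact Or.inr (Or.inr (Or.inl rfl))

lemma gz_inv_letters (x : ZMod 2) : (gz m x)⁻¹ ∈ lettersDA m := by
  rcases z2_cases x with rfl | rfl
  · exact Or.inr (Or.inl rfl)
  · exact Or.inr (Or.inr (Or.inr rfl))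

lemma two_norm {h : DA m} (hh : TwoSyllable m h) :
    ∃ a ∈ lettersDA m, ∃ b ∈ lettersDA m, ∃ s t : ℕ, h = a ^ s * b ^ t ∧ s + t ≤ ℓD m h := by
  obtain ⟨a, ha, b, hb, s, t, e⟩ := hh
  have hl := abs_le.1 (abs_lam_le h)
  have mix : ∀ x y : ZMod 2, y = x ∨ y = x + 1 := by decide
  obtain ⟨x, hx⟩ := mem_letters ha
  obtain ⟨y, hy⟩ := mem_letters hb
  rcases hx with rfl | rfl <;> rcases hy with rfl | rfl
  · refine ⟨_, ha, _, hb, s, t, e, ?_⟩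
    rw [e, lam_mul, lam_pow, lam_pow, lam_gz, lam_gz] at hl
    rw [e]; omega
  · rcases mix x y with rfl | rfl
    · rcases le_total t s with h1 | h1
      · obtain ⟨c, rfl⟩ := Nat.exists_eq_add_of_le h1
        have e' : h = gz m y ^ c := by rw [e, inv_pow, add_comm t, pow_add, mul_inv_cancel_right]
        refine ⟨_, ha, _, hb, c, 0, by rw [e', pow_zero, mul_one], ?_⟩
        rw [e', lam_pow, lam_gz] at hl
        rw [e']; omega
      · obtain ⟨c, rfl⟩ := Nat.exists_eq_add_of_le h1
        have e' : h = (gz m y)⁻¹ ^ c := by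
          rw [e, pow_add, ← mul_assoc, inv_pow _ s, mul_inv_cancel, one_mul]
        refine ⟨_, hb, _, hb, c, 0, by rw [e', pow_zero, mul_one], ?_⟩
        rw [e', lam_pow, lam_inv, lam_gz] at hl
        rw [e']; omega
    · exact ⟨_, ha, _, hb, s, t, e, by rw [e]; exact len_pos_neg x s t⟩
  · rcases mix x y with rfl | rfl
    · rcases le_total s t with h1 | h1
      · obtain ⟨c, rfl⟩ := Nat.exists_eq_add_of_le h1
        have e' : h = gz m y ^ c := by rw [e, inv_pow, pow_add, inv_mul_cancel_left]
        refine ⟨_, hb, _, hb, c, 0, by rw [e', pow_zero, mul_one], ?_⟩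
        rw [e', lam_pow, lam_gz] at hl
        rw [e']; omega
      · obtain ⟨c, rfl⟩ := Nat.exists_eq_add_of_le h1
        have e' : h = (gz m y)⁻¹ ^ c := by
          rw [e, add_comm t, pow_add, inv_pow _ t, inv_mul_cancel_right]
        refine ⟨_, ha, _, ha, c, 0, by rw [e', pow_zero, mul_one], ?_⟩
        rw [e', lam_pow, lam_inv, lam_gz] at hl
        rw [e']; omega
    · exact ⟨_, ha, _, hb, s, t, e, by rw [e]; exact len_neg_pos x s t⟩
  · refine ⟨_, ha, _, hb, s, t, e, ?_⟩
    rw [e, lam_mul, lam_pow, lam_pow, lam_inv, lam_inv, lam_gz, lam_gz] at hl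
    rw [e]; omega

open Classical in
lemma cov_left (k : ℕ) : Cov {g1 : DA m | ℓD m g1 = k ∧ TwoSyllable m g1} (16 * (k + 1) ^ 2) := by
  let A : Finset (DA m) := {gen 2 (DMat m) 0, (gen 2 (DMat m) 0)⁻¹, gen 2 (DMat m) 1,
    (gen 2 (DMat m) 1)⁻¹}
  have hA : A.card ≤ 4 := Finset.card_le_four
  have hA' : ∀ a ∈ lettersDA m, a ∈ A := by
    intro a ha
    simpa [A, lettersDA] using ha
  have := cov_param ((A ×ˢ A) ×ˢ (Finset.range (k + 1) ×ˢ Finset.range (k + 1)))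
    (fun i => i.1.1 ^ i.2.1 * i.1.2 ^ i.2.2) (S := {g1 : DA m | ℓD m g1 = k ∧ TwoSyllable m g1}) ?_
  · refine this.mono subset_rfl ?_
    rw [Finset.card_product, Finset.card_product, Finset.card_product, Finset.card_range,
      ← sq (k + 1)]
    exact Nat.mul_le_mul_right _ (Nat.mul_le_mul hA hA)
  · rintro g1 ⟨h1, h2⟩
    obtain ⟨a, ha, b, hb, s, t, e, hl⟩ := two_norm h2
    refine ⟨((a, b), (s, t)), ?_, e.symm⟩
    simp only [Finset.mem_product, Finset.mem_range]
    exact ⟨⟨hA' a ha, hA' b hb⟩, by omega, by omega⟩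

lemma two_pos {h : DA m} (hh : TwoSyllable m h) (hp : posElt m h) :
    ∃ (x : ZMod 2) (s : ℕ), s ≤ ℓD m h ∧ h = gz m x ^ s * gz m (x + 1) ^ (ℓD m h - s) := by
  obtain ⟨a, ha, b, hb, s, t, e, hst⟩ := two_norm hh
  have hl := len_of_pos hp
  have mix : ∀ x y : ZMod 2, y = x ∨ y = x + 1 := by decide
  have pw : ∀ (x : ZMod 2) (n : ℕ), h = gz m x ^ n → (n : ℤ) = ℓD m h → ∃ (x : ZMod 2) (s : ℕ),
      s ≤ ℓD m h ∧ h = gz m x ^ s * gz m (x + 1) ^ (ℓD m h - s) := by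
    intro x n e1 e2
    have e2' : n = ℓD m h := by exact_mod_cast e2
    exact ⟨x, n, e2'.le, by rw [← e2', Nat.sub_self, pow_zero, mul_one]; exact e1⟩
  obtain ⟨x, hx⟩ := mem_letters ha
  obtain ⟨y, hy⟩ := mem_letters hb
  have hl' : (ℓD m h : ℤ) = s * lam a + t * lam b := by
    rw [hl, e, lam_mul, lam_pow, lam_pow]
  rcases hx with rfl | rfl <;> rcases hy with rfl | rfl <;>
    simp only [lam_inv, lam_gz] at hl'
  · rcases mix x y with rfl | rfl
    · exact pw y (s + t) (by rw [e, pow_add]) (by push_cast; omega)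
    · refine ⟨x, s, by omega, ?_⟩
      rw [show ℓD m h - s = t by omega]; exact e
  · have : t = 0 := by omega
    subst this
    exact pw x s (by rw [e, pow_zero, mul_one]) (by omega)
  · have : s = 0 := by omega
    subst this
    exact pw y t (by rw [e, pow_zero, one_mul]) (by omega)
  · have h1 : t = 0 := by omega
    have h2 : s = 0 := by omega
    subst h1; subst h2
    exact pw 0 0 (by rw [e]; simp) (by omega)

lemma right_key (g : DA m) (x : ZMod 2) (N k s s' : ℕ) (hs : s < s') (hN : s' ≤ N)
    (h1 : ℓD m (g * (gz m x ^ s * gz m (x + 1) ^ (N - s))⁻¹) = k)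
    (h2 : ℓD m (g * (gz m x ^ s' * gz m (x + 1) ^ (N - s'))⁻¹) = k) : s' ≤ k := by
  obtain ⟨j, rfl⟩ := Nat.exists_eq_add_of_le hs.le
  have h3 := len_three (m := m) x s j (by omega)
  have e : gz m x ^ s * gz m (x + 1) ^ j * (gz m x)⁻¹ ^ (s + j) =
      (g * (gz m x ^ s * gz m (x + 1) ^ (N - s))⁻¹)⁻¹ *
      (g * (gz m x ^ (s + j) * gz m (x + 1) ^ (N - (s + j)))⁻¹) := by
    rw [show N - s = j + (N - (s + j)) by omega, pow_add (gz m (x + 1)), inv_pow]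
    group
  have h4 := len_mul (g * (gz m x ^ s * gz m (x + 1) ^ (N - s))⁻¹)⁻¹
    (g * (gz m x ^ (s + j) * gz m (x + 1) ^ (N - (s + j)))⁻¹)
  rw [← e, len_inv, h1, h2] at h4
  omega

lemma cov_right_x (g : DA m) (x : ZMod 2) (N k : ℕ) :
    Cov {g1 : DA m | ℓD m g1 = k ∧ ∃ s ≤ N, g1 = g * (gz m x ^ s * gz m (x + 1) ^ (N - s))⁻¹}
      (k + 1) := by
  by_cases hc : ∃ s ≤ N, k < s ∧ ℓD m (g * (gz m x ^ s * gz m (x + 1) ^ (N - s))⁻¹) = k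
  · obtain ⟨s0, hN, hk, hl⟩ := hc
    refine (cov_param (Finset.range 1) (fun _ => g * (gz m x ^ s0 * gz m (x + 1) ^ (N - s0))⁻¹)
      ?_).mono subset_rfl (by simp)
    rintro _ ⟨h1, s, hs, rfl⟩
    refine ⟨0, by simp, ?_⟩
    rcases lt_trichotomy s s0 with h | h | h
    · have := right_key g x N k s s0 h hN h1 hl
      omega
    · rw [h]
    · have := right_key g x N k s0 s h hs hl h1
      omega
  · refine (cov_param (Finset.range (k + 1))
      (fun s => g * (gz m x ^ s * gz m (x + 1) ^ (N - s))⁻¹) ?_).mono subset_rfl (by simp)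
    rintro _ ⟨h1, s, hs, rfl⟩
    refine ⟨s, ?_, rfl⟩
    rw [Finset.mem_range]
    by_contra hk
    exact hc ⟨s, hs, by omega, h1⟩

lemma cov_right {g : DA m} (hg : posElt m g) (k : ℕ) :
    Cov {g1 | g1 ∈ LD g k ∧ TwoSyllable m (g1⁻¹ * g)} (2 * (k + 1)) := by
  refine (Cov.union (cov_right_x g 0 (ℓD m g - k) k) (cov_right_x g 1 (ℓD m g - k) k)).mono ?_
    (by omega)
  rintro g1 ⟨⟨h1, h2⟩, h3⟩
  have hp := (pos_factors (g := g1) (h := g1⁻¹ * g) (by rwa [mul_inv_cancel_left])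
    (by rwa [mul_inv_cancel_left])).2
  obtain ⟨x, s, hs, e⟩ := two_pos h3 hp
  have hN : ℓD m (g1⁻¹ * g) = ℓD m g - k := by omega
  rw [hN] at hs e
  have e' : g1 = g * (gz m x ^ s * gz m (x + 1) ^ (ℓD m g - k - s))⁻¹ := by
    rw [← e]; group
  rcases z2_cases x with rfl | rfl
  · exact Or.inl ⟨h1, s, hs, e'⟩
  · exact Or.inr ⟨h1, s, hs, e'⟩

lemma noDelta_quot {g : DA m} (hg : posElt m g) {d : ℕ} (hd : IsMaxDeltaPow m d g) :
    NoDelta ((Delta m ^ d)⁻¹ * g) := by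
  have h3 := hm.out
  obtain ⟨h1, h2⟩ := hd
  unfold IsLeftDiv at h1
  have hp := (pos_factors (g := Delta m ^ d) (h := (Delta m ^ d)⁻¹ * g)
    (by rwa [mul_inv_cancel_left]) (by rwa [mul_inv_cancel_left])).2
  intro p q e he hl
  have l1 := len_of_pos hp
  rw [he] at l1
  rw [lam_mul, lam_mul, lam_zpow, lam_Delta, ← he] at l1
  have a1 := lam_le p
  have a2 := lam_le q
  have a3 := lam_le (Delta m ^ e)
  rw [lam_zpow, lam_Delta] at a3
  rcases lt_trichotomy e 0 with h | h | h
  · have : e * (m : ℤ) < 0 := mul_neg_of_neg_of_pos h (by omega)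
    omega
  · exact h
  · exfalso
    obtain ⟨n, rfl⟩ : ∃ n : ℕ, e = n := ⟨e.toNat, by omega⟩
    rw [zpow_natCast] at he hl
    have hg' : (Delta m ^ (d + n))⁻¹ * g = (Delta m ^ (-(n : ℤ)) * p * (Delta m ^ (-(n : ℤ)))⁻¹) * q := by
      have : g = Delta m ^ d * (p * Delta m ^ n * q) := by rw [← he, mul_inv_cancel_left]
      rw [this, pow_add]; group
    have b1 := len_mul (Delta m ^ (-(n : ℤ)) * p * (Delta m ^ (-(n : ℤ)))⁻¹) q
    rw [len_conj, ← hg'] at b1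
    have b2 := len_mul (Delta m ^ (d + n)) ((Delta m ^ (d + n))⁻¹ * g)
    rw [mul_inv_cancel_left, len_Delta_pow] at b2
    rw [len_Delta_pow] at h1 hl
    have := h2 (d + n) (by
      unfold IsLeftDiv
      rw [len_Delta_pow]
      rw [add_mul] at b2 ⊢
      omega)
    omega

/-- second kind of permissible factorisation, positive case -/
def P2 (g : DA m) (g1 : DA m) : Prop := ∃ k₁ k₂ : ℕ, IsMaxDeltaPow m k₁ g1 ∧
  IsMaxDeltaPow m k₂ (g1⁻¹ * g) ∧ IsMaxDeltaPow m (k₁ + k₂) g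

lemma cov_P2 {g : DA m} (hg : posElt m g) (k : ℕ) :
    Cov {g1 | g1 ∈ LD g k ∧ P2 g g1} ((k + 1) * ((k + 1) * (m * (2 * k + 1)))) := by
  have h3 := hm.out
  by_cases hd : ∃ d, IsMaxDeltaPow m d g
  · obtain ⟨d, hd⟩ := hd
    have hN := noDelta_quot hg hd
    have := Cov.iUnion (Finset.range (k + 1))
      (S := fun k1 => (fun u => Delta m ^ d * u * (Delta m ^ (d - k1))⁻¹) ''
        LD ((Delta m ^ d)⁻¹ * g) (k - k1 * m)) (n := (k + 1) * (m * (2 * k + 1))) (by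
        intro k1 _
        refine ((cov_chain hN (k - k1 * m)).image _).mono subset_rfl ?_
        have : k - k1 * m ≤ k := Nat.sub_le _ _
        gcongr)
    rw [Finset.card_range] at this
    refine this.mono ?_ le_rfl
    rintro g1 ⟨⟨l1, l2⟩, k1, k2, m1, m2, m3⟩
    have hdk : d = k1 + k2 := le_antisymm (m3.2 _ hd.1) (hd.2 _ m3.1)
    have a1 := m1.1
    have a2 := m2.1
    have a3 := m3.1
    unfold IsLeftDiv at a1 a2 a3
    rw [len_Delta_pow] at a1 a2 a3
    have hk1 : k1 ≤ k := by
      have : k1 * 1 ≤ k1 * m := Nat.mul_le_mul_left _ (by omega)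
      omega
    simp only [Set.mem_iUnion]
    refine ⟨k1, Finset.mem_range.2 (by omega), (Delta m ^ d)⁻¹ * g1 * Delta m ^ k2, ?_, ?_⟩
    · have e1 : (Delta m ^ d)⁻¹ * g1 * Delta m ^ k2 =
          Delta m ^ (-(k2 : ℤ)) * ((Delta m ^ k1)⁻¹ * g1) * (Delta m ^ (-(k2 : ℤ)))⁻¹ := by
        rw [hdk, pow_add]; group
      have e2 : ((Delta m ^ d)⁻¹ * g1 * Delta m ^ k2)⁻¹ * ((Delta m ^ d)⁻¹ * g) =
          (Delta m ^ k2)⁻¹ * (g1⁻¹ * g) := by group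
      have f1 : ℓD m ((Delta m ^ d)⁻¹ * g1 * Delta m ^ k2) = k - k1 * m := by
        rw [e1, len_conj]; omega
      refine ⟨f1, ?_⟩
      rw [e2, f1, hdk]
      rw [add_mul] at a3
      omega
    · change Delta m ^ d * ((Delta m ^ d)⁻¹ * g1 * Delta m ^ k2) * (Delta m ^ (d - k1))⁻¹ = g1
      rw [show d - k1 = k2 by omega]; group
  · refine ⟨∅, ?_, by simp⟩
    rintro g1 ⟨-, k1, k2, -, -, h⟩
    exact absurd ⟨_, h⟩ hd

lemma cov_pos {g : DA m} (hg : posElt m g) (k : ℕ) :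
    Cov {g1 | g1 ∈ LD g k ∧ (TwoSyllable m g1 ∨ TwoSyllable m (g1⁻¹ * g) ∨ P2 g g1)}
      ((18 + 2 * m) * (k + 1) ^ 3) := by
  refine (((cov_left k).union (cov_right hg k)).union (cov_P2 hg k)).mono ?_ ?_
  · rintro g1 ⟨h1, h | h | h⟩
    · exact Or.inl (Or.inl ⟨h1.1, h⟩)
    · exact Or.inl (Or.inr ⟨h1, h⟩)
    · exact Or.inr ⟨h1, h⟩
  · have e1 : (k + 1) ^ 2 ≤ (k + 1) ^ 3 := Nat.pow_le_pow_right (by omega) (by omega)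
    have e2 : (k + 1) ^ 1 ≤ (k + 1) ^ 3 := Nat.pow_le_pow_right (by omega) (by omega)
    have e3 : (k + 1) * ((k + 1) * (m * (2 * k + 1))) ≤ 2 * m * (k + 1) ^ 3 := by
      have : (k + 1) * ((k + 1) * (m * (2 * k + 1))) ≤
          (k + 1) * ((k + 1) * (m * (2 * (k + 1)))) := by gcongr; omega
      refine this.trans (le_of_eq (by ring))
    nlinarith

lemma two_iota {h : DA m} (hh : TwoSyllable m h) : TwoSyllable m (iota m h) := by
  have : ∀ a ∈ lettersDA m, iota m a ∈ lettersDA m := by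
    intro a ha
    obtain ⟨x, rfl | rfl⟩ := mem_letters ha
    · rw [iota_gz]; exact gz_inv_letters x
    · rw [map_inv, iota_gz, inv_inv]; exact gz_letters x
  obtain ⟨a, ha, b, hb, s, t, rfl⟩ := hh
  exact ⟨_, this a ha, _, this b hb, s, t, by simp⟩

lemma div_iota (k : ℕ) (g : DA m) : IsLeftDiv (ℓD m) (Delta m ^ k) (iota m g) ↔
    IsLeftDiv (ℓD m) ((Delta m)⁻¹ ^ k) g := by
  unfold IsLeftDiv
  have e1 : iota m ((Delta m)⁻¹ ^ k) = Delta m ^ k := by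
    rw [map_pow, map_inv, iota_Delta, inv_inv]
  rw [← e1, ← map_inv, ← map_mul, len_iota, len_iota, len_iota]

lemma max_iota {k : ℕ} {g : DA m} (h : IsMaxNegDeltaPow m k g) : IsMaxDeltaPow m k (iota m g) :=
  ⟨(div_iota k g).2 h.1, fun k' h' => h.2 k' ((div_iota k' g).1 h')⟩

def N2 (g : DA m) (g1 : DA m) : Prop := ∃ k₁ k₂ : ℕ, IsMaxNegDeltaPow m k₁ g1 ∧
  IsMaxNegDeltaPow m k₂ (g1⁻¹ * g) ∧ IsMaxNegDeltaPow m (k₁ + k₂) g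

lemma cov_neg {g : DA m} (hg : negElt m g) (k : ℕ) :
    Cov {g1 | g1 ∈ LD g k ∧ (TwoSyllable m g1 ∨ TwoSyllable m (g1⁻¹ * g) ∨ N2 g g1)}
      ((18 + 2 * m) * (k + 1) ^ 3) := by
  refine ((cov_pos (pos_iota hg) k).image (iota m)).mono ?_ le_rfl
  rintro g1 ⟨⟨h1, h2⟩, h⟩
  refine ⟨iota m g1, ⟨⟨?_, ?_⟩, ?_⟩, iota_iota g1⟩
  · rw [len_iota, h1]
  · rw [← map_inv, ← map_mul, len_iota, len_iota, len_iota, h2]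
  · rw [← map_inv, ← map_mul]
    rcases h with h | h | ⟨k1, k2, a, b, c⟩
    · exact Or.inl (two_iota h)
    · exact Or.inr (Or.inl (two_iota h))
    · refine Or.inr (Or.inr ⟨k1, k2, max_iota a, ?_, max_iota c⟩)
      rw [← map_inv, ← map_mul]; exact max_iota b

lemma cov_all (g : DA m) (k : ℕ) :
    Cov {g₁ : DA m | ℓD m g₁ = k ∧ PermDA m g (g₁, g₁⁻¹ * g)} ((36 + 4 * m) * (k + 1) ^ 3) := by
  by_cases hs : posElt m g ∨ negElt m g
  · have h1 : Cov {g1 | posElt m g ∧ g1 ∈ LD g k ∧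
        (TwoSyllable m g1 ∨ TwoSyllable m (g1⁻¹ * g) ∨ P2 g g1)} ((18 + 2 * m) * (k + 1) ^ 3) := by
      by_cases hp : posElt m g
      · exact (cov_pos hp k).mono (fun g1 h => h.2) le_rfl
      · exact ⟨∅, fun g1 h => absurd h.1 hp, by simp⟩
    have h2 : Cov {g1 | negElt m g ∧ g1 ∈ LD g k ∧
        (TwoSyllable m g1 ∨ TwoSyllable m (g1⁻¹ * g) ∨ N2 g g1)} ((18 + 2 * m) * (k + 1) ^ 3) := by
      by_cases hp : negElt m g
      · exact (cov_neg hp k).mono (fun g1 h => h.2) le_rfl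
      · exact ⟨∅, fun g1 h => absurd h.1 hp, by simp⟩
    refine (h1.union h2).mono ?_ (le_of_eq (by ring))
    rintro g1 ⟨l1, -, l2, hP⟩
    have hL : g1 ∈ LD g k := ⟨l1, l2⟩
    rcases hP hs with h | h | ⟨hp, -, -, h⟩ | ⟨hp, -, -, h⟩
    · rcases hs with hp | hp
      · exact Or.inl ⟨hp, hL, Or.inl h⟩
      · exact Or.inr ⟨hp, hL, Or.inl h⟩
    · rcases hs with hp | hp
      · exact Or.inl ⟨hp, hL, Or.inr (Or.inl h)⟩
      · exact Or.inr ⟨hp, hL, Or.inr (Or.inl h)⟩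
    · exact Or.inl ⟨hp, hL, Or.inr (Or.inr h)⟩
    · exact Or.inr ⟨hp, hL, Or.inr (Or.inr h)⟩
  · refine (cov_chain (noDelta_unsigned hm.out hs) k).mono ?_ ?_
    · rintro g1 ⟨l1, -, l2, -⟩
      exact ⟨l1, l2⟩
    · have e2 : (k + 1) ^ 2 ≤ (k + 1) ^ 3 := Nat.pow_le_pow_right (by omega) (by omega)
      have : (k + 1) * (m * (2 * k + 1)) ≤ (k + 1) * (m * (2 * (k + 1))) := by gcongr; omega
      refine this.trans ?_
      calc (k + 1) * (m * (2 * (k + 1))) = 2 * m * (k + 1) ^ 2 := by ring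
        _ ≤ (36 + 4 * m) * (k + 1) ^ 3 := Nat.mul_le_mul (by omega) e2

end counting
/-- **Corollary (D1 for dihedral Artin groups).** There is a polynomial `P` bounding,
for every `g ∈ DA(m)`, the number of permissible left divisors of `g` of length `k`
by `P(k)`. -/
theorem dihedral_D1
    (m : ℕ) (hm : 3 ≤ m) :
    ∃ P : Polynomial ℝ, (∀ c : ℕ, 0 ≤ P.coeff c) ∧
      ∀ (g : DA m) (k : ℕ),
        {g₁ : DA m | ℓD m g₁ = k ∧ PermDA m g (g₁, g₁⁻¹ * g)}.Finite ∧
        ({g₁ : DA m | ℓD m g₁ = k ∧ PermDA m g (g₁, g₁⁻¹ * g)}.ncard : ℝ) ≤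
          P.eval (k : ℝ) := by
  have : Fact (3 ≤ m) := ⟨hm⟩
  refine ⟨(Polynomial.C (36 + 4 * m) * (Polynomial.X + 1) ^ 3 : Polynomial ℕ).map (Nat.castRingHom ℝ),
    fun c => by rw [Polynomial.coeff_map]; simp, fun g k => ?_⟩
  obtain ⟨F, h1, h2⟩ := cov_all g k
  have h3 := (Set.ncard_le_ncard h1 F.finite_toSet).trans ((Set.ncard_coe_finset F).le.trans h2)
  refine ⟨F.finite_toSet.subset h1, ?_⟩
  have h4 := (Nat.cast_le (α := ℝ)).2 h3
  refine h4.trans (le_of_eq ?_)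
  simp

end ArtinRD
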